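/- There is a family of first-order sequents {S_i}_{i<ω} such that: (1) the size of S_i is polynomial in i; (2) there is no elementary function of i bounding the size of the smallest cut-free LK⁺-proofs (and likewise of the smallest cut-free LK⁺⁺-proofs) of S_i; (3) S_i has proofs with cuts of size polynomially bounded in i; (4) S_i contains weak quantifiers only; and (5) for every cut-formula A occurring in the polynomial-size proof of S_i, the formula ∀x̄ (A^M → A^M) occurs on the left-hand side of the end-sequent S_i, where A^M is the matrix of A. -/

import Mathlib

namespace EpsCalc

/-! ## Syntax: terms and formulas of first-order logic extended by epsilon terms.
We use a locally nameless representation: `bvar` are de Bruijn indices for bound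
variables (bound by `all`, `ex`, or `eps`), `fvar` are named free variables. -/

mutual
inductive Tm : Type where
  | bvar : ℕ → Tm
  | fvar : ℕ → Tm
  | func : ℕ → Tms → Tm
  | eps  : Fm → Tm          -- the epsilon term ε_x A(x)

inductive Tms : Type where
  | nil  : Tms
  | cons : Tm → Tms → Tms

inductive Fm : Type where
  | atom : ℕ → Tms → Fm
  | and  : Fm → Fm → Fm
  | or   : Fm → Fm → Fm
  | imp  : Fm → Fm → Fm
  | not  : Fm → Fm
  | all  : Fm → Fm          -- ∀ binding de Bruijn index 0
  | ex   : Fm → Fm          -- ∃ binding de Bruijn index 0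
end

/-! lifting of bound variables (shift indices ≥ k by one) -/
mutual
def liftT (k : ℕ) : Tm → Tm
  | .bvar n => if n < k then .bvar n else .bvar (n+1)
  | .fvar a => .fvar a
  | .func f ts => .func f (liftTs k ts)
  | .eps A => .eps (liftF (k+1) A)
def liftTs (k : ℕ) : Tms → Tms
  | .nil => .nil
  | .cons t ts => .cons (liftT k t) (liftTs k ts)
def liftF (k : ℕ) : Fm → Fm
  | .atom p ts => .atom p (liftTs k ts)
  | .and A B => .and (liftF k A) (liftF k B)
  | .or A B => .or (liftF k A) (liftF k B)
  | .imp A B => .imp (liftF k A) (liftF k B)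
  | .not A => .not (liftF k A)
  | .all A => .all (liftF (k+1) A)
  | .ex A => .ex (liftF (k+1) A)
end

/-! substitution of a term for the bound variable k -/
mutual
def subT (k : ℕ) (u : Tm) : Tm → Tm
  | .bvar n => if n = k then u else if n < k then .bvar n else .bvar (n-1)
  | .fvar a => .fvar a
  | .func f ts => .func f (subTs k u ts)
  | .eps A => .eps (subF (k+1) (liftT 0 u) A)
def subTs (k : ℕ) (u : Tm) : Tms → Tms
  | .nil => .nil
  | .cons t ts => .cons (subT k u t) (subTs k u ts)
def subF (k : ℕ) (u : Tm) : Fm → Fm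
  | .atom p ts => .atom p (subTs k u ts)
  | .and A B => .and (subF k u A) (subF k u B)
  | .or A B => .or (subF k u A) (subF k u B)
  | .imp A B => .imp (subF k u A) (subF k u B)
  | .not A => .not (subF k u A)
  | .all A => .all (subF (k+1) (liftT 0 u) A)
  | .ex A => .ex (subF (k+1) (liftT 0 u) A)
end

/-- instantiate the outermost bound variable of `A` with the term `t`:  A(t) -/
def inst0 (A : Fm) (t : Tm) : Fm := subF 0 t A

/-! substitution of a term for a *free* variable -/
mutual
def sfvT (a : ℕ) (u : Tm) : Tm → Tm
  | .bvar n => .bvar n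
  | .fvar b => if b = a then u else .fvar b
  | .func f ts => .func f (sfvTs a u ts)
  | .eps A => .eps (sfvF a (liftT 0 u) A)
def sfvTs (a : ℕ) (u : Tm) : Tms → Tms
  | .nil => .nil
  | .cons t ts => .cons (sfvT a u t) (sfvTs a u ts)
def sfvF (a : ℕ) (u : Tm) : Fm → Fm
  | .atom p ts => .atom p (sfvTs a u ts)
  | .and A B => .and (sfvF a u A) (sfvF a u B)
  | .or A B => .or (sfvF a u A) (sfvF a u B)
  | .imp A B => .imp (sfvF a u A) (sfvF a u B)
  | .not A => .not (sfvF a u A)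
  | .all A => .all (sfvF a (liftT 0 u) A)
  | .ex A => .ex (sfvF a (liftT 0 u) A)
end

/-! abstraction of a free variable into a bound variable (for universal closure) -/
mutual
def abT (a k : ℕ) : Tm → Tm
  | .bvar n => .bvar n
  | .fvar b => if b = a then .bvar k else .fvar b
  | .func f ts => .func f (abTs a k ts)
  | .eps A => .eps (abF a (k+1) A)
def abTs (a k : ℕ) : Tms → Tms
  | .nil => .nil
  | .cons t ts => .cons (abT a k t) (abTs a k ts)
def abF (a k : ℕ) : Fm → Fm
  | .atom p ts => .atom p (abTs a k ts)
  | .and A B => .and (abF a k A) (abF a k B)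
  | .or A B => .or (abF a k A) (abF a k B)
  | .imp A B => .imp (abF a k A) (abF a k B)
  | .not A => .not (abF a k A)
  | .all A => .all (abF a (k+1) A)
  | .ex A => .ex (abF a (k+1) A)
end

/-! free variables -/
mutual
def fvT : Tm → List ℕ
  | .bvar _ => []
  | .fvar a => [a]
  | .func _ ts => fvTs ts
  | .eps A => fvF A
def fvTs : Tms → List ℕ
  | .nil => []
  | .cons t ts => fvT t ++ fvTs ts
def fvF : Fm → List ℕ
  | .atom _ ts => fvTs ts
  | .and A B => fvF A ++ fvF B
  | .or A B => fvF A ++ fvF B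
  | .imp A B => fvF A ++ fvF B
  | .not A => fvF A
  | .all A => fvF A
  | .ex A => fvF A
end

/-! function symbols occurring in an expression -/
mutual
def fsT : Tm → List ℕ
  | .bvar _ => []
  | .fvar _ => []
  | .func f ts => f :: fsTs ts
  | .eps A => fsF A
def fsTs : Tms → List ℕ
  | .nil => []
  | .cons t ts => fsT t ++ fsTs ts
def fsF : Fm → List ℕ
  | .atom _ ts => fsTs ts
  | .and A B => fsF A ++ fsF B
  | .or A B => fsF A ++ fsF B
  | .imp A B => fsF A ++ fsF B
  | .not A => fsF A
  | .all A => fsF A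
  | .ex A => fsF A
end

/-! number of symbols (size) -/
mutual
def szT : Tm → ℕ
  | .bvar _ => 1
  | .fvar _ => 1
  | .func _ ts => 1 + szTs ts
  | .eps A => 1 + szF A
def szTs : Tms → ℕ
  | .nil => 0
  | .cons t ts => szT t + szTs ts
def szF : Fm → ℕ
  | .atom _ ts => 1 + szTs ts
  | .and A B => 1 + szF A + szF B
  | .or A B => 1 + szF A + szF B
  | .imp A B => 1 + szF A + szF B
  | .not A => 1 + szF A
  | .all A => 1 + szF A
  | .ex A => 1 + szF A
end

/-! epsilon-freeness (first-order language) and quantifier-freeness (epsilon language) -/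
mutual
def noEpsT : Tm → Bool
  | .bvar _ => true
  | .fvar _ => true
  | .func _ ts => noEpsTs ts
  | .eps _ => false
def noEpsTs : Tms → Bool
  | .nil => true
  | .cons t ts => noEpsT t && noEpsTs ts
def noEpsF : Fm → Bool
  | .atom _ ts => noEpsTs ts
  | .and A B => noEpsF A && noEpsF B
  | .or A B => noEpsF A && noEpsF B
  | .imp A B => noEpsF A && noEpsF B
  | .not A => noEpsF A
  | .all A => noEpsF A
  | .ex A => noEpsF A
end

/-- `A` is a formula of the first-order language: it contains no epsilon terms. -/
def isFO (A : Fm) : Bool := noEpsF A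

/-- quantifier-freeness: `A` belongs to the language of the epsilon calculus
(propositional language over epsilon terms) iff `qfree A`. -/
def qfree : Fm → Bool
  | .atom _ _ => true
  | .and A B => qfree A && qfree B
  | .or A B => qfree A && qfree B
  | .imp A B => qfree A && qfree B
  | .not A => qfree A
  | .all _ => false
  | .ex _ => false

/-- The epsilon translation [A]^ε of a formula. -/
def epsT : Fm → Fm
  | .atom p ts => .atom p ts
  | .and A B => .and (epsT A) (epsT B)
  | .or A B => .or (epsT A) (epsT B)
  | .imp A B => .imp (epsT A) (epsT B)
  | .not A => .not (epsT A)
  | .ex A => inst0 (epsT A) (.eps (epsT A))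
  | .all A => inst0 (epsT A) (.eps (.not (epsT A)))

/-! ## The matrix A^M of a formula: delete all quantifiers and replace the
variables bound by them by fresh free variables. -/
mutual
def mxT (b d : ℕ) : Tm → Tm
  | .bvar n => if n < d then .fvar (b + (d - 1 - n)) else .bvar (n - d)
  | .fvar a => .fvar a
  | .func f ts => .func f (mxTs b d ts)
  | .eps A => .eps A          -- (the matrix is only used on epsilon-free formulas)
def mxTs (b d : ℕ) : Tms → Tms
  | .nil => .nil
  | .cons t ts => .cons (mxT b d t) (mxTs b d ts)
def mxF (b d : ℕ) : Fm → Fm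
  | .atom p ts => .atom p (mxTs b d ts)
  | .and A B => .and (mxF b d A) (mxF b d B)
  | .or A B => .or (mxF b d A) (mxF b d B)
  | .imp A B => .imp (mxF b d A) (mxF b d B)
  | .not A => .not (mxF b d A)
  | .all A => mxF b (d+1) A
  | .ex A => mxF b (d+1) A
end

def maxFv (A : Fm) : ℕ := (fvF A).foldr max 0

/-- the matrix A^M of A -/
def matrix (A : Fm) : Fm := mxF (maxFv A + 1) 0 A

/-- universal closure ∀x̄ A over all free variables of A -/
def uclose (A : Fm) : Fm :=
  ((fvF A).dedup).foldr (fun a B => Fm.all (abF a 0 B)) A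

/-! ## Weak/strong quantifier occurrences.
`posW A` : all quantifier occurrences of `A` are weak when `A` occurs in the
succedent; `negW A` : likewise for the antecedent. -/
mutual
def posW : Fm → Bool
  | .atom _ _ => true
  | .and A B => posW A && posW B
  | .or A B => posW A && posW B
  | .imp A B => negW A && posW B
  | .not A => negW A
  | .all _ => false
  | .ex A => posW A
def negW : Fm → Bool
  | .atom _ _ => true
  | .and A B => negW A && negW B
  | .or A B => negW A && negW B
  | .imp A B => posW A && negW B
  | .not A => posW A
  | .all A => negW A
  | .ex _ => false
end

/-- the sequent Γ ⊢ Δ contains weak quantifier occurrences only -/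
def WeakSeq (Γ Δ : List Fm) : Prop :=
  (∀ A ∈ Γ, negW A = true) ∧ (∀ A ∈ Δ, posW A = true)

/-- the sequent Γ ⊢ Δ is in the first-order language -/
def FOSeq (Γ Δ : List Fm) : Prop :=
  (∀ A ∈ Γ, isFO A = true) ∧ (∀ A ∈ Δ, isFO A = true)

/-- the sequent Γ ⊢ Δ is in the language of the epsilon calculus -/
def EpsSeq (Γ Δ : List Fm) : Prop :=
  (∀ A ∈ Γ, qfree A = true) ∧ (∀ A ∈ Δ, qfree A = true)

def fvSeq (Γ Δ : List Fm) : List ℕ :=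
  (Γ ++ Δ).foldr (fun A l => fvF A ++ l) []

def fsSeq (Γ Δ : List Fm) : List ℕ :=
  (Γ ++ Δ).foldr (fun A l => fsF A ++ l) []

def seqSize (Γ Δ : List Fm) : ℕ :=
  (Γ ++ Δ).foldr (fun A n => szF A + n) 0


/-! ## LK derivation trees.
`Deriv Γ Δ` are derivation trees of the sequent Γ ⊢ Δ built from the rules of
Gentzen's LK, where the strong quantifier rules `allR`/`exL` carry an
eigenvariable but *no* correctness condition; the various eigenvariable
disciplines (LK, LK⁺, LK⁺⁺) are imposed as predicates on the trees below. -/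
inductive Deriv : List Fm → List Fm → Type where
  | ax (A : Fm) : Deriv [A] [A]
  | andL (A B : Fm) (Γ Δ : List Fm) :
      Deriv (A :: B :: Γ) Δ → Deriv (Fm.and A B :: Γ) Δ
  | andR (A B : Fm) (Γ₁ Δ₁ Γ₂ Δ₂ : List Fm) :
      Deriv Γ₁ (A :: Δ₁) → Deriv Γ₂ (B :: Δ₂) →
      Deriv (Γ₁ ++ Γ₂) (Fm.and A B :: (Δ₁ ++ Δ₂))
  | orL (A B : Fm) (Γ₁ Δ₁ Γ₂ Δ₂ : List Fm) :
      Deriv (A :: Γ₁) Δ₁ → Deriv (B :: Γ₂) Δ₂ →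
      Deriv (Fm.or A B :: (Γ₁ ++ Γ₂)) (Δ₁ ++ Δ₂)
  | orR (A B : Fm) (Γ Δ : List Fm) :
      Deriv Γ (A :: B :: Δ) → Deriv Γ (Fm.or A B :: Δ)
  | impL (A B : Fm) (Γ₁ Δ₁ Γ₂ Δ₂ : List Fm) :
      Deriv Γ₁ (A :: Δ₁) → Deriv (B :: Γ₂) Δ₂ →
      Deriv (Fm.imp A B :: (Γ₁ ++ Γ₂)) (Δ₁ ++ Δ₂)
  | impR (A B : Fm) (Γ Δ : List Fm) :
      Deriv (A :: Γ) (B :: Δ) → Deriv Γ (Fm.imp A B :: Δ)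
  | notL (A : Fm) (Γ Δ : List Fm) :
      Deriv Γ (A :: Δ) → Deriv (Fm.not A :: Γ) Δ
  | notR (A : Fm) (Γ Δ : List Fm) :
      Deriv (A :: Γ) Δ → Deriv Γ (Fm.not A :: Δ)
  | wL (A : Fm) (Γ Δ : List Fm) : Deriv Γ Δ → Deriv (A :: Γ) Δ
  | wR (A : Fm) (Γ Δ : List Fm) : Deriv Γ Δ → Deriv Γ (A :: Δ)
  | cL (A : Fm) (Γ Δ : List Fm) : Deriv (A :: A :: Γ) Δ → Deriv (A :: Γ) Δ
  | cR (A : Fm) (Γ Δ : List Fm) : Deriv Γ (A :: A :: Δ) → Deriv Γ (A :: Δ)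
  | cut (A : Fm) (Γ₁ Δ₁ Γ₂ Δ₂ : List Fm) :
      Deriv Γ₁ (A :: Δ₁) → Deriv (A :: Γ₂) Δ₂ →
      Deriv (Γ₁ ++ Γ₂) (Δ₁ ++ Δ₂)
  | allL (t : Tm) (A : Fm) (Γ Δ : List Fm) :
      Deriv (inst0 A t :: Γ) Δ → Deriv (Fm.all A :: Γ) Δ
  | allR (a : ℕ) (A : Fm) (Γ Δ : List Fm) :
      Deriv Γ (inst0 A (Tm.fvar a) :: Δ) → Deriv Γ (Fm.all A :: Δ)
  | exL (a : ℕ) (A : Fm) (Γ Δ : List Fm) :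
      Deriv (inst0 A (Tm.fvar a) :: Γ) Δ → Deriv (Fm.ex A :: Γ) Δ
  | exR (t : Tm) (A : Fm) (Γ Δ : List Fm) :
      Deriv Γ (inst0 A t :: Δ) → Deriv Γ (Fm.ex A :: Δ)
  | permL (Γ Γ' Δ : List Fm) : Γ.Perm Γ' → Deriv Γ Δ → Deriv Γ' Δ
  | permR (Γ Δ Δ' : List Fm) : Δ.Perm Δ' → Deriv Γ Δ → Deriv Γ Δ'

namespace Deriv

/-- the size of a derivation: the number of inference steps occurring in it -/
def size : ∀ {Γ Δ}, Deriv Γ Δ → ℕ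
  | _, _, ax _ => 1
  | _, _, andL _ _ _ _ d => d.size + 1
  | _, _, andR _ _ _ _ _ _ d e => d.size + e.size + 1
  | _, _, orL _ _ _ _ _ _ d e => d.size + e.size + 1
  | _, _, orR _ _ _ _ d => d.size + 1
  | _, _, impL _ _ _ _ _ _ d e => d.size + e.size + 1
  | _, _, impR _ _ _ _ d => d.size + 1
  | _, _, notL _ _ _ d => d.size + 1
  | _, _, notR _ _ _ d => d.size + 1
  | _, _, wL _ _ _ d => d.size + 1
  | _, _, wR _ _ _ d => d.size + 1
  | _, _, cL _ _ _ d => d.size + 1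
  | _, _, cR _ _ _ d => d.size + 1
  | _, _, cut _ _ _ _ _ d e => d.size + e.size + 1
  | _, _, allL _ _ _ _ d => d.size + 1
  | _, _, allR _ _ _ _ d => d.size + 1
  | _, _, exL _ _ _ _ d => d.size + 1
  | _, _, exR _ _ _ _ d => d.size + 1
  | _, _, permL _ _ _ _ d => d.size + 1
  | _, _, permR _ _ _ _ d => d.size + 1

/-- the list of cut formulas occurring in a derivation -/
def cutFms : ∀ {Γ Δ}, Deriv Γ Δ → List Fm
  | _, _, ax _ => []
  | _, _, andL _ _ _ _ d => d.cutFms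
  | _, _, andR _ _ _ _ _ _ d e => d.cutFms ++ e.cutFms
  | _, _, orL _ _ _ _ _ _ d e => d.cutFms ++ e.cutFms
  | _, _, orR _ _ _ _ d => d.cutFms
  | _, _, impL _ _ _ _ _ _ d e => d.cutFms ++ e.cutFms
  | _, _, impR _ _ _ _ d => d.cutFms
  | _, _, notL _ _ _ d => d.cutFms
  | _, _, notR _ _ _ d => d.cutFms
  | _, _, wL _ _ _ d => d.cutFms
  | _, _, wR _ _ _ d => d.cutFms
  | _, _, cL _ _ _ d => d.cutFms
  | _, _, cR _ _ _ d => d.cutFms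
  | _, _, cut A _ _ _ _ d e => A :: (d.cutFms ++ e.cutFms)
  | _, _, allL _ _ _ _ d => d.cutFms
  | _, _, allR _ _ _ _ d => d.cutFms
  | _, _, exL _ _ _ _ d => d.cutFms
  | _, _, exR _ _ _ _ d => d.cutFms
  | _, _, permL _ _ _ _ d => d.cutFms
  | _, _, permR _ _ _ _ d => d.cutFms

/-- data of the strong quantifier inferences of a derivation:
(eigenvariable, auxiliary formula, main formula) -/
def strongs : ∀ {Γ Δ}, Deriv Γ Δ → List (ℕ × Fm × Fm)
  | _, _, ax _ => []
  | _, _, andL _ _ _ _ d => d.strongs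
  | _, _, andR _ _ _ _ _ _ d e => d.strongs ++ e.strongs
  | _, _, orL _ _ _ _ _ _ d e => d.strongs ++ e.strongs
  | _, _, orR _ _ _ _ d => d.strongs
  | _, _, impL _ _ _ _ _ _ d e => d.strongs ++ e.strongs
  | _, _, impR _ _ _ _ d => d.strongs
  | _, _, notL _ _ _ d => d.strongs
  | _, _, notR _ _ _ d => d.strongs
  | _, _, wL _ _ _ d => d.strongs
  | _, _, wR _ _ _ d => d.strongs
  | _, _, cL _ _ _ d => d.strongs
  | _, _, cR _ _ _ d => d.strongs
  | _, _, cut _ _ _ _ _ d e => d.strongs ++ e.strongs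
  | _, _, allL _ _ _ _ d => d.strongs
  | _, _, allR a A _ _ d => (a, inst0 A (Tm.fvar a), Fm.all A) :: d.strongs
  | _, _, exL a A _ _ d => (a, inst0 A (Tm.fvar a), Fm.ex A) :: d.strongs
  | _, _, exR _ _ _ _ d => d.strongs
  | _, _, permL _ _ _ _ d => d.strongs
  | _, _, permR _ _ _ _ d => d.strongs

/-- the standard (local) eigenvariable conditions of LK: the eigenvariable of a
strong quantifier inference does not occur free in its conclusion -/
def Std : ∀ {Γ Δ}, Deriv Γ Δ → Prop
  | _, _, ax _ => True
  | _, _, andL _ _ _ _ d => d.Std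
  | _, _, andR _ _ _ _ _ _ d e => d.Std ∧ e.Std
  | _, _, orL _ _ _ _ _ _ d e => d.Std ∧ e.Std
  | _, _, orR _ _ _ _ d => d.Std
  | _, _, impL _ _ _ _ _ _ d e => d.Std ∧ e.Std
  | _, _, impR _ _ _ _ d => d.Std
  | _, _, notL _ _ _ d => d.Std
  | _, _, notR _ _ _ d => d.Std
  | _, _, wL _ _ _ d => d.Std
  | _, _, wR _ _ _ d => d.Std
  | _, _, cL _ _ _ d => d.Std
  | _, _, cR _ _ _ d => d.Std
  | _, _, cut _ _ _ _ _ d e => d.Std ∧ e.Std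
  | _, _, allL _ _ _ _ d => d.Std
  | _, _, allR a A Γ Δ d => a ∉ fvSeq Γ (Fm.all A :: Δ) ∧ d.Std
  | _, _, exL a A Γ Δ d => a ∉ fvSeq (Fm.ex A :: Γ) Δ ∧ d.Std
  | _, _, exR _ _ _ _ d => d.Std
  | _, _, permL _ _ _ _ d => d.Std
  | _, _, permR _ _ _ _ d => d.Std

end Deriv

/-- the side variable relation `<_φ`: `b` is a side variable of `a` in `φ` if `φ`
contains a strong quantifier inference with eigenvariable `a` whose auxiliary
formula contains the free variable `b` -/
def sideRel {Γ Δ} (d : Deriv Γ Δ) (a b : ℕ) : Prop :=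
  ∃ e ∈ d.strongs, e.1 = a ∧ b ∈ fvF e.2.1 ∧ b ≠ a

/-- acyclicity of a binary relation -/
def Acyc (r : ℕ → ℕ → Prop) : Prop := ∀ x, ¬ Relation.TransGen r x x

/-- LK⁺-suitability of (all strong quantifier inferences of) a derivation:
substitutability, the side variable condition, and weak regularity. -/
def SuitP {Γ Δ} (d : Deriv Γ Δ) : Prop :=
  (∀ e ∈ d.strongs, e.1 ∉ fvSeq Γ Δ) ∧
  Acyc (sideRel d) ∧
  (d.strongs.map (·.1)).Nodup

/-- LK⁺⁺-suitability: substitutability, the side variable condition, and very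
weak regularity (equal eigenvariables only for equal main formulas). -/
def SuitPP {Γ Δ} (d : Deriv Γ Δ) : Prop :=
  (∀ e ∈ d.strongs, e.1 ∉ fvSeq Γ Δ) ∧
  Acyc (sideRel d) ∧
  (∀ e₁ ∈ d.strongs, ∀ e₂ ∈ d.strongs, e₁.1 = e₂.1 → e₁.2.2 = e₂.2.2)

/-! ## The sequent calculus Lε of the epsilon calculus:
atomic axioms, the propositional, structural and cut rules of LK, the weak
quantifier rules ∃_r and ∀_l producing epsilon terms, and a substitution rule
replacing the strong quantifier inferences. -/
inductive EDeriv : List Fm → List Fm → Type where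
  | ax (p : ℕ) (ts : Tms) : EDeriv [Fm.atom p ts] [Fm.atom p ts]
  | andL (A B : Fm) (Γ Δ : List Fm) :
      EDeriv (A :: B :: Γ) Δ → EDeriv (Fm.and A B :: Γ) Δ
  | andR (A B : Fm) (Γ₁ Δ₁ Γ₂ Δ₂ : List Fm) :
      EDeriv Γ₁ (A :: Δ₁) → EDeriv Γ₂ (B :: Δ₂) →
      EDeriv (Γ₁ ++ Γ₂) (Fm.and A B :: (Δ₁ ++ Δ₂))
  | orL (A B : Fm) (Γ₁ Δ₁ Γ₂ Δ₂ : List Fm) :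
      EDeriv (A :: Γ₁) Δ₁ → EDeriv (B :: Γ₂) Δ₂ →
      EDeriv (Fm.or A B :: (Γ₁ ++ Γ₂)) (Δ₁ ++ Δ₂)
  | orR (A B : Fm) (Γ Δ : List Fm) :
      EDeriv Γ (A :: B :: Δ) → EDeriv Γ (Fm.or A B :: Δ)
  | impL (A B : Fm) (Γ₁ Δ₁ Γ₂ Δ₂ : List Fm) :
      EDeriv Γ₁ (A :: Δ₁) → EDeriv (B :: Γ₂) Δ₂ →
      EDeriv (Fm.imp A B :: (Γ₁ ++ Γ₂)) (Δ₁ ++ Δ₂)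
  | impR (A B : Fm) (Γ Δ : List Fm) :
      EDeriv (A :: Γ) (B :: Δ) → EDeriv Γ (Fm.imp A B :: Δ)
  | notL (A : Fm) (Γ Δ : List Fm) :
      EDeriv Γ (A :: Δ) → EDeriv (Fm.not A :: Γ) Δ
  | notR (A : Fm) (Γ Δ : List Fm) :
      EDeriv (A :: Γ) Δ → EDeriv Γ (Fm.not A :: Δ)
  | wL (A : Fm) (Γ Δ : List Fm) : EDeriv Γ Δ → EDeriv (A :: Γ) Δ
  | wR (A : Fm) (Γ Δ : List Fm) : EDeriv Γ Δ → EDeriv Γ (A :: Δ)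
  | cL (A : Fm) (Γ Δ : List Fm) : EDeriv (A :: A :: Γ) Δ → EDeriv (A :: Γ) Δ
  | cR (A : Fm) (Γ Δ : List Fm) : EDeriv Γ (A :: A :: Δ) → EDeriv Γ (A :: Δ)
  | cut (A : Fm) (Γ₁ Δ₁ Γ₂ Δ₂ : List Fm) :
      EDeriv Γ₁ (A :: Δ₁) → EDeriv (A :: Γ₂) Δ₂ →
      EDeriv (Γ₁ ++ Γ₂) (Δ₁ ++ Δ₂)
  | allL (t : Tm) (A : Fm) (Γ Δ : List Fm) :
      EDeriv (inst0 A t :: Γ) Δ →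
      EDeriv (inst0 A (Tm.eps (Fm.not A)) :: Γ) Δ
  | exR (t : Tm) (A : Fm) (Γ Δ : List Fm) :
      EDeriv Γ (inst0 A t :: Δ) →
      EDeriv Γ (inst0 A (Tm.eps A) :: Δ)
  | subst (a : ℕ) (t : Tm) (Γ Δ : List Fm) :
      EDeriv Γ Δ → EDeriv (Γ.map (sfvF a t)) (Δ.map (sfvF a t))
  | permL (Γ Γ' Δ : List Fm) : Γ.Perm Γ' → EDeriv Γ Δ → EDeriv Γ' Δ
  | permR (Γ Δ Δ' : List Fm) : Δ.Perm Δ' → EDeriv Γ Δ → EDeriv Γ Δ'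

namespace EDeriv

/-- the size of an Lε derivation -/
def size : ∀ {Γ Δ}, EDeriv Γ Δ → ℕ
  | _, _, ax _ _ => 1
  | _, _, andL _ _ _ _ d => d.size + 1
  | _, _, andR _ _ _ _ _ _ d e => d.size + e.size + 1
  | _, _, orL _ _ _ _ _ _ d e => d.size + e.size + 1
  | _, _, orR _ _ _ _ d => d.size + 1
  | _, _, impL _ _ _ _ _ _ d e => d.size + e.size + 1
  | _, _, impR _ _ _ _ d => d.size + 1
  | _, _, notL _ _ _ d => d.size + 1
  | _, _, notR _ _ _ d => d.size + 1
  | _, _, wL _ _ _ d => d.size + 1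
  | _, _, wR _ _ _ d => d.size + 1
  | _, _, cL _ _ _ d => d.size + 1
  | _, _, cR _ _ _ d => d.size + 1
  | _, _, cut _ _ _ _ _ d e => d.size + e.size + 1
  | _, _, allL _ _ _ _ d => d.size + 1
  | _, _, exR _ _ _ _ d => d.size + 1
  | _, _, subst _ _ _ _ d => d.size + 1
  | _, _, permL _ _ _ _ d => d.size + 1
  | _, _, permR _ _ _ _ d => d.size + 1

/-- the list of cut formulas occurring in an Lε derivation -/
def cutFms : ∀ {Γ Δ}, EDeriv Γ Δ → List Fm
  | _, _, ax _ _ => []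
  | _, _, andL _ _ _ _ d => d.cutFms
  | _, _, andR _ _ _ _ _ _ d e => d.cutFms ++ e.cutFms
  | _, _, orL _ _ _ _ _ _ d e => d.cutFms ++ e.cutFms
  | _, _, orR _ _ _ _ d => d.cutFms
  | _, _, impL _ _ _ _ _ _ d e => d.cutFms ++ e.cutFms
  | _, _, impR _ _ _ _ d => d.cutFms
  | _, _, notL _ _ _ d => d.cutFms
  | _, _, notR _ _ _ d => d.cutFms
  | _, _, wL _ _ _ d => d.cutFms
  | _, _, wR _ _ _ d => d.cutFms
  | _, _, cL _ _ _ d => d.cutFms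
  | _, _, cR _ _ _ d => d.cutFms
  | _, _, cut A _ _ _ _ d e => A :: (d.cutFms ++ e.cutFms)
  | _, _, allL _ _ _ _ d => d.cutFms
  | _, _, exR _ _ _ _ d => d.cutFms
  | _, _, subst _ _ _ _ d => d.cutFms
  | _, _, permL _ _ _ _ d => d.cutFms
  | _, _, permR _ _ _ _ d => d.cutFms

end EDeriv

/-! ## Elementary functions and polynomial bounds -/

/-- `iterExp k n` is the `k`-fold iterated exponential 2^2^...^n. -/
def iterExp : ℕ → ℕ → ℕ
  | 0, n => n
  | k+1, n => 2 ^ iterExp k n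

/-- A function ℕ → ℕ is elementary (in the sense of Kalmár: definable by a
quantifier-free formula from +, ×, and x ↦ 2^x) iff it is majorized by some
fixed iterated exponential; we use this growth-rate characterization. -/
def IsElementary (f : ℕ → ℕ) : Prop := ∃ k, ∀ n, f n ≤ iterExp k n

/-- `g` is polynomially bounded -/
def PolyBdd (g : ℕ → ℕ) : Prop := ∃ p : Polynomial ℕ, ∀ n, g n ≤ p.eval n

/-! ## Skolemization (relationally): `SkP F A B` (`SkN F A B`) holds if `B` is
obtained from `A`, occurring in the succedent (antecedent), by replacing the
strong quantifiers by terms built from fresh function symbols in `F`. -/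
mutual
inductive SkP (F : ℕ → Prop) : Fm → Fm → Prop where
  | atom (p ts) : SkP F (Fm.atom p ts) (Fm.atom p ts)
  | and {A A' B B'} : SkP F A A' → SkP F B B' → SkP F (Fm.and A B) (Fm.and A' B')
  | or {A A' B B'} : SkP F A A' → SkP F B B' → SkP F (Fm.or A B) (Fm.or A' B')
  | imp {A A' B B'} : SkN F A A' → SkP F B B' → SkP F (Fm.imp A B) (Fm.imp A' B')
  | not {A A'} : SkN F A A' → SkP F (Fm.not A) (Fm.not A')
  | ex {A A'} : SkP F A A' → SkP F (Fm.ex A) (Fm.ex A')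
  | all {A B} (f : ℕ) (ts : Tms) : F f →
      SkP F (inst0 A (Tm.func f ts)) B → SkP F (Fm.all A) B
inductive SkN (F : ℕ → Prop) : Fm → Fm → Prop where
  | atom (p ts) : SkN F (Fm.atom p ts) (Fm.atom p ts)
  | and {A A' B B'} : SkN F A A' → SkN F B B' → SkN F (Fm.and A B) (Fm.and A' B')
  | or {A A' B B'} : SkN F A A' → SkN F B B' → SkN F (Fm.or A B) (Fm.or A' B')
  | imp {A A' B B'} : SkP F A A' → SkN F B B' → SkN F (Fm.imp A B) (Fm.imp A' B')
  | not {A A'} : SkP F A A' → SkN F (Fm.not A) (Fm.not A')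
  | all {A A'} : SkN F A A' → SkN F (Fm.all A) (Fm.all A')
  | ex {A B} (f : ℕ) (ts : Tms) : F f →
      SkN F (inst0 A (Tm.func f ts)) B → SkN F (Fm.ex A) B
end

/-- `S'` is a Skolemization of the sequent `S` using fresh function symbols from `F` -/
def SkolemSeq (F : ℕ → Prop) (S S' : List Fm × List Fm) : Prop :=
  List.Forall₂ (SkN F) S.1 S'.1 ∧ List.Forall₂ (SkP F) S.2 S'.2

/-!
The `n`-th sequent says, in an applicative language with a constant `2` satisfying
`2 f x = f (f x)`, that `2 2 … 2 S 0`, a term of linear size denoting a tower of twos, is a number.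

With cuts: let `N_0` be "is a number" and `N_{k+1} t = ∀ x (N_k x → N_k (t x))`. Each `N_{k+2} 2`
has a derivation of size linear in `k`, so a single cut with `N_{n+2} 2`, applied to the remaining
twos and to `S` and `0`, gives a derivation of quadratic size.

Without cuts: a cut-free derivation of a sequent with weak quantifiers only contains no strong
quantifier inference, so the eigenvariable conditions of LK⁺ and LK⁺⁺ never come into play. Let the
terms range over all finite types above `ℕ` and read "is a number" as "is at most `v`". This
satisfies all axioms except the instance of `∀ x (N_0 x → N_0 (S x))` at a term of value `v`, and it
falsifies the succedent when `v` is below the tower. So the derivation uses such an instance for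
every `v` below the tower.

The universal closure of `A^M → A^M` is valid and may be added for the cut formula `A = N_{n+2} 2`.
As it makes the sequents exponentially long in `n`, the family is indexed by `i` with
`n = log₂ (i + 1)`.
-/

/-! ### Lifting and substitution -/

mutual
theorem liftT_liftT {i k : ℕ} (h : i ≤ k) :
    ∀ t, liftT (k + 1) (liftT i t) = liftT i (liftT k t)
  | .bvar n => by grind [liftT]
  | .fvar _ => rfl
  | .func f ts => congrArg (Tm.func f) (liftTs_liftTs h ts)
  | .eps A => congrArg Tm.eps (liftF_liftF (Nat.succ_le_succ h) A)
theorem liftTs_liftTs {i k : ℕ} (h : i ≤ k) :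
    ∀ ts, liftTs (k + 1) (liftTs i ts) = liftTs i (liftTs k ts)
  | .nil => rfl
  | .cons t ts => congrArg₂ Tms.cons (liftT_liftT h t) (liftTs_liftTs h ts)
theorem liftF_liftF {i k : ℕ} (h : i ≤ k) :
    ∀ A, liftF (k + 1) (liftF i A) = liftF i (liftF k A)
  | .atom p ts => congrArg (Fm.atom p) (liftTs_liftTs h ts)
  | .and A B => congrArg₂ Fm.and (liftF_liftF h A) (liftF_liftF h B)
  | .or A B => congrArg₂ Fm.or (liftF_liftF h A) (liftF_liftF h B)
  | .imp A B => congrArg₂ Fm.imp (liftF_liftF h A) (liftF_liftF h B)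
  | .not A => congrArg Fm.not (liftF_liftF h A)
  | .all A => congrArg Fm.all (liftF_liftF (Nat.succ_le_succ h) A)
  | .ex A => congrArg Fm.ex (liftF_liftF (Nat.succ_le_succ h) A)
end

mutual
theorem subT_liftT (k : ℕ) (u : Tm) : ∀ t, subT k u (liftT k t) = t
  | .bvar n => by grind [liftT, subT]
  | .fvar _ => rfl
  | .func f ts => congrArg (Tm.func f) (subTs_liftTs k u ts)
  | .eps A => congrArg Tm.eps (subF_liftF (k + 1) (liftT 0 u) A)
theorem subTs_liftTs (k : ℕ) (u : Tm) : ∀ ts, subTs k u (liftTs k ts) = ts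
  | .nil => rfl
  | .cons t ts => congrArg₂ Tms.cons (subT_liftT k u t) (subTs_liftTs k u ts)
theorem subF_liftF (k : ℕ) (u : Tm) : ∀ A, subF k u (liftF k A) = A
  | .atom p ts => congrArg (Fm.atom p) (subTs_liftTs k u ts)
  | .and A B => congrArg₂ Fm.and (subF_liftF k u A) (subF_liftF k u B)
  | .or A B => congrArg₂ Fm.or (subF_liftF k u A) (subF_liftF k u B)
  | .imp A B => congrArg₂ Fm.imp (subF_liftF k u A) (subF_liftF k u B)
  | .not A => congrArg Fm.not (subF_liftF k u A)
  | .all A => congrArg Fm.all (subF_liftF (k + 1) (liftT 0 u) A)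
  | .ex A => congrArg Fm.ex (subF_liftF (k + 1) (liftT 0 u) A)
end

mutual
theorem subT_succ_liftT {i k : ℕ} (h : i ≤ k) (u : Tm) :
    ∀ t, subT (k + 1) (liftT i u) (liftT i t) = liftT i (subT k u t)
  | .bvar n => by grind [liftT, subT]
  | .fvar _ => rfl
  | .func f ts => congrArg (Tm.func f) (subTs_succ_liftTs h u ts)
  | .eps A => congrArg Tm.eps <| by
      rw [← liftT_liftT (Nat.zero_le i)]
      exact subF_succ_liftF (Nat.succ_le_succ h) _ A
theorem subTs_succ_liftTs {i k : ℕ} (h : i ≤ k) (u : Tm) :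
    ∀ ts, subTs (k + 1) (liftT i u) (liftTs i ts) = liftTs i (subTs k u ts)
  | .nil => rfl
  | .cons t ts => congrArg₂ Tms.cons (subT_succ_liftT h u t) (subTs_succ_liftTs h u ts)
theorem subF_succ_liftF {i k : ℕ} (h : i ≤ k) (u : Tm) :
    ∀ A, subF (k + 1) (liftT i u) (liftF i A) = liftF i (subF k u A)
  | .atom p ts => congrArg (Fm.atom p) (subTs_succ_liftTs h u ts)
  | .and A B => congrArg₂ Fm.and (subF_succ_liftF h u A) (subF_succ_liftF h u B)
  | .or A B => congrArg₂ Fm.or (subF_succ_liftF h u A) (subF_succ_liftF h u B)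
  | .imp A B => congrArg₂ Fm.imp (subF_succ_liftF h u A) (subF_succ_liftF h u B)
  | .not A => congrArg Fm.not (subF_succ_liftF h u A)
  | .all A => congrArg Fm.all <| by
      rw [← liftT_liftT (Nat.zero_le i)]
      exact subF_succ_liftF (Nat.succ_le_succ h) _ A
  | .ex A => congrArg Fm.ex <| by
      rw [← liftT_liftT (Nat.zero_le i)]
      exact subF_succ_liftF (Nat.succ_le_succ h) _ A
end

mutual
theorem fvT_liftT (k : ℕ) : ∀ t, fvT (liftT k t) = fvT t
  | .bvar n => by simp only [liftT]; split <;> rfl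
  | .fvar _ => rfl
  | .func _ ts => fvTs_liftTs k ts
  | .eps A => fvF_liftF (k + 1) A
theorem fvTs_liftTs (k : ℕ) : ∀ ts, fvTs (liftTs k ts) = fvTs ts
  | .nil => rfl
  | .cons t ts => congrArg₂ (· ++ ·) (fvT_liftT k t) (fvTs_liftTs k ts)
theorem fvF_liftF (k : ℕ) : ∀ A, fvF (liftF k A) = fvF A
  | .atom _ ts => fvTs_liftTs k ts
  | .and A B | .or A B | .imp A B => congrArg₂ (· ++ ·) (fvF_liftF k A) (fvF_liftF k B)
  | .not A => fvF_liftF k A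
  | .all A | .ex A => fvF_liftF (k + 1) A
end

mutual
theorem szT_liftT (k : ℕ) : ∀ t, szT (liftT k t) = szT t
  | .bvar n => by simp only [liftT]; split <;> rfl
  | .fvar _ => rfl
  | .func _ ts => congrArg (1 + ·) (szTs_liftTs k ts)
  | .eps A => congrArg (1 + ·) (szF_liftF (k + 1) A)
theorem szTs_liftTs (k : ℕ) : ∀ ts, szTs (liftTs k ts) = szTs ts
  | .nil => rfl
  | .cons t ts => congrArg₂ (· + ·) (szT_liftT k t) (szTs_liftTs k ts)
theorem szF_liftF (k : ℕ) : ∀ A, szF (liftF k A) = szF A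
  | .atom _ ts => congrArg (1 + ·) (szTs_liftTs k ts)
  | .and A B | .or A B | .imp A B => congrArg₂ (1 + · + ·) (szF_liftF k A) (szF_liftF k B)
  | .not A => congrArg (1 + ·) (szF_liftF k A)
  | .all A | .ex A => congrArg (1 + ·) (szF_liftF (k + 1) A)
end

mutual
theorem noEpsT_liftT (k : ℕ) : ∀ t, noEpsT (liftT k t) = noEpsT t
  | .bvar n => by simp only [liftT]; split <;> rfl
  | .fvar _ => rfl
  | .func _ ts => noEpsTs_liftTs k ts
  | .eps _ => rfl
theorem noEpsTs_liftTs (k : ℕ) : ∀ ts, noEpsTs (liftTs k ts) = noEpsTs ts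
  | .nil => rfl
  | .cons t ts => congrArg₂ (· && ·) (noEpsT_liftT k t) (noEpsTs_liftTs k ts)
end

/-! ### Universal closures and matrices -/

mutual
theorem szT_abT (a k : ℕ) : ∀ t, szT (abT a k t) = szT t
  | .bvar _ => rfl
  | .fvar b => by simp only [abT]; split <;> rfl
  | .func _ ts => congrArg (1 + ·) (szTs_abTs a k ts)
  | .eps A => congrArg (1 + ·) (szF_abF a (k + 1) A)
theorem szTs_abTs (a k : ℕ) : ∀ ts, szTs (abTs a k ts) = szTs ts
  | .nil => rfl
  | .cons t ts => congrArg₂ (· + ·) (szT_abT a k t) (szTs_abTs a k ts)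
theorem szF_abF (a k : ℕ) : ∀ A, szF (abF a k A) = szF A
  | .atom _ ts => congrArg (1 + ·) (szTs_abTs a k ts)
  | .and A B | .or A B | .imp A B => congrArg₂ (1 + · + ·) (szF_abF a k A) (szF_abF a k B)
  | .not A => congrArg (1 + ·) (szF_abF a k A)
  | .all A | .ex A => congrArg (1 + ·) (szF_abF a (k + 1) A)
end

mutual
theorem noEpsT_abT (a k : ℕ) : ∀ t, noEpsT (abT a k t) = noEpsT t
  | .bvar _ => rfl
  | .fvar b => by simp only [abT]; split <;> rfl
  | .func _ ts => noEpsTs_abTs a k ts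
  | .eps _ => rfl
theorem noEpsTs_abTs (a k : ℕ) : ∀ ts, noEpsTs (abTs a k ts) = noEpsTs ts
  | .nil => rfl
  | .cons t ts => congrArg₂ (· && ·) (noEpsT_abT a k t) (noEpsTs_abTs a k ts)
end

theorem noEpsF_abF (a : ℕ) : ∀ (k : ℕ) (A : Fm), noEpsF (abF a k A) = noEpsF A
  | k, .atom _ ts => noEpsTs_abTs a k ts
  | k, .and A B | k, .or A B | k, .imp A B =>
      congrArg₂ (· && ·) (noEpsF_abF a k A) (noEpsF_abF a k B)
  | k, .not A => noEpsF_abF a k A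
  | k, .all A | k, .ex A => noEpsF_abF a (k + 1) A

mutual
theorem posW_abF (a k : ℕ) : ∀ A, posW (abF a k A) = posW A
  | .atom _ _ => rfl
  | .and A B | .or A B => congrArg₂ (· && ·) (posW_abF a k A) (posW_abF a k B)
  | .imp A B => congrArg₂ (· && ·) (negW_abF a k A) (posW_abF a k B)
  | .not A => negW_abF a k A
  | .all _ => rfl
  | .ex A => posW_abF a (k + 1) A
theorem negW_abF (a k : ℕ) : ∀ A, negW (abF a k A) = negW A
  | .atom _ _ => rfl
  | .and A B | .or A B => congrArg₂ (· && ·) (negW_abF a k A) (negW_abF a k B)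
  | .imp A B => congrArg₂ (· && ·) (posW_abF a k A) (negW_abF a k B)
  | .not A => posW_abF a k A
  | .all A => negW_abF a (k + 1) A
  | .ex _ => rfl
end

mutual
theorem length_fvT_le (t : Tm) : (fvT t).length ≤ szT t := by
  match t with
  | .bvar _ => exact Nat.zero_le _
  | .fvar _ => exact le_rfl
  | .func _ ts => exact (length_fvTs_le ts).trans (Nat.le_add_left _ _)
  | .eps A => exact (length_fvF_le A).trans (Nat.le_add_left _ _)
theorem length_fvTs_le (ts : Tms) : (fvTs ts).length ≤ szTs ts := by
  match ts with
  | .nil => exact le_rfl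
  | .cons t ts =>
    simp only [fvTs, szTs, List.length_append]
    exact Nat.add_le_add (length_fvT_le t) (length_fvTs_le ts)
theorem length_fvF_le (A : Fm) : (fvF A).length ≤ szF A := by
  match A with
  | .atom _ ts => exact (length_fvTs_le ts).trans (Nat.le_add_left _ _)
  | .and A B | .or A B | .imp A B =>
    have := length_fvF_le A
    have := length_fvF_le B
    simp only [fvF, szF, List.length_append]
    lia
  | .not A | .all A | .ex A => exact (length_fvF_le A).trans (Nat.le_add_left _ _)
end

theorem uclose_induction {P : Fm → Prop} {A : Fm} (base : P A)
    (step : ∀ a B, P B → P (.all (abF a 0 B))) : P (uclose A) := by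
  unfold uclose
  induction (fvF A).dedup with
  | nil => exact base
  | cons a l ih => exact step a _ ih

theorem noEpsF_uclose {A : Fm} (h : noEpsF A = true) : noEpsF (uclose A) = true :=
  uclose_induction h fun a B hB => (noEpsF_abF a 0 B).trans hB

theorem negW_uclose {A : Fm} (h : negW A = true) : negW (uclose A) = true :=
  uclose_induction h fun a B hB => (negW_abF a 0 B).trans hB

theorem szF_uclose_le (A : Fm) : szF (uclose A) ≤ 2 * szF A := by
  have prefix_size (l : List ℕ) :
      szF (l.foldr (fun a B => Fm.all (abF a 0 B)) A) = l.length + szF A := by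
    induction l with
    | nil => exact (Nat.zero_add _).symm
    | cons a l ih =>
      simp only [List.foldr_cons, szF, szF_abF, ih, List.length_cons]
      lia
  have := (List.dedup_sublist (fvF A)).length_le.trans (length_fvF_le A)
  rw [uclose, prefix_size]
  lia

mutual
theorem szT_mxT (b d : ℕ) : ∀ t, szT (mxT b d t) = szT t
  | .bvar n => by simp only [mxT]; split <;> rfl
  | .fvar _ => rfl
  | .func _ ts => congrArg (1 + ·) (szTs_mxTs b d ts)
  | .eps _ => rfl
theorem szTs_mxTs (b d : ℕ) : ∀ ts, szTs (mxTs b d ts) = szTs ts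
  | .nil => rfl
  | .cons t ts => congrArg₂ (· + ·) (szT_mxT b d t) (szTs_mxTs b d ts)
end

theorem szF_mxF_le (b : ℕ) : ∀ (d : ℕ) (A : Fm), szF (mxF b d A) ≤ szF A
  | d, .atom _ ts => (congrArg (1 + ·) (szTs_mxTs b d ts)).le
  | d, .and A B | d, .or A B | d, .imp A B =>
      Nat.add_le_add (Nat.add_le_add_left (szF_mxF_le b d A) 1) (szF_mxF_le b d B)
  | d, .not A => Nat.add_le_add_left (szF_mxF_le b d A) 1
  | d, .all A | d, .ex A => (szF_mxF_le b (d + 1) A).trans (Nat.le_add_left _ _)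

mutual
theorem noEpsT_mxT (b d : ℕ) : ∀ t, noEpsT (mxT b d t) = noEpsT t
  | .bvar n => by simp only [mxT]; split <;> rfl
  | .fvar _ => rfl
  | .func _ ts => noEpsTs_mxTs b d ts
  | .eps _ => rfl
theorem noEpsTs_mxTs (b d : ℕ) : ∀ ts, noEpsTs (mxTs b d ts) = noEpsTs ts
  | .nil => rfl
  | .cons t ts => congrArg₂ (· && ·) (noEpsT_mxT b d t) (noEpsTs_mxTs b d ts)
end

theorem noEpsF_mxF (b : ℕ) : ∀ (d : ℕ) (A : Fm), noEpsF (mxF b d A) = noEpsF A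
  | d, .atom _ ts => noEpsTs_mxTs b d ts
  | d, .and A B | d, .or A B | d, .imp A B =>
      congrArg₂ (· && ·) (noEpsF_mxF b d A) (noEpsF_mxF b d B)
  | d, .not A => noEpsF_mxF b d A
  | d, .all A | d, .ex A => noEpsF_mxF b (d + 1) A

theorem posW_mxF_and_negW_mxF (b : ℕ) :
    ∀ (d : ℕ) (A : Fm), posW (mxF b d A) = true ∧ negW (mxF b d A) = true
  | _, .atom _ _ => ⟨rfl, rfl⟩
  | d, .and A B | d, .or A B | d, .imp A B => by
      simp [mxF, posW, negW, posW_mxF_and_negW_mxF b d A, posW_mxF_and_negW_mxF b d B]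
  | d, .not A => (posW_mxF_and_negW_mxF b d A).symm
  | d, .all A | d, .ex A => posW_mxF_and_negW_mxF b (d + 1) A

/-! ### The applicative language and the axioms -/

namespace Tm

/-- Application `f x` in the applicative language, encoded by the binary function symbol `0`. -/
def app (f x : Tm) : Tm := .func 0 (.cons f (.cons x .nil))

/-- The numeral `2`, a constant denoting the operator `f ↦ f ∘ f` in every type; encoded by the
function symbol `1`. -/
def two : Tm := .func 1 .nil

/-- The successor function as a constant of the applicative language; encoded by the function
symbol `2`. -/
def suc : Tm := .func 2 .nil

/-- The constant `0` of the applicative language; encoded by the function symbol `3`. -/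
def zero : Tm := .func 3 .nil

@[simp]
theorem subT_app (k : ℕ) (u f x : Tm) : subT k u (f.app x) = (subT k u f).app (subT k u x) := rfl

@[simp]
theorem subT_two (k : ℕ) (u : Tm) : subT k u two = two := rfl

@[simp]
theorem szT_app (f x : Tm) : szT (f.app x) = szT f + szT x + 1 := by
  simp only [app, szT, szTs]; lia

@[simp]
theorem noEpsT_app (f x : Tm) : noEpsT (f.app x) = (noEpsT f && noEpsT x) := by
  simp only [app, noEpsT, noEpsTs, Bool.and_true]

/-- The term `t 2 2 … 2` (application associates to the left) with `n` twos after `t`. -/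
def appTwos : ℕ → Tm → Tm
  | 0, t => t
  | n + 1, t => appTwos n (t.app two)

theorem appTwos_succ (n : ℕ) (t : Tm) : appTwos (n + 1) t = (appTwos n t).app two := by
  induction n generalizing t with
  | zero => rfl
  | succ _ ih => exact ih (t.app two)

theorem szT_appTwos (n : ℕ) (t : Tm) : szT (appTwos n t) = szT t + 2 * n := by
  induction n with
  | zero => rfl
  | succ n ih => rw [appTwos_succ, szT_app, ih, two, szT, szTs]; lia

theorem noEpsT_appTwos (n : ℕ) (t : Tm) : noEpsT (appTwos n t) = noEpsT t := by
  induction n with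
  | zero => rfl
  | succ n ih => rw [appTwos_succ, noEpsT_app, ih, two, noEpsT, noEpsTs, Bool.and_true]

/-- The term `2 2 … 2 S 0` with `n + 1` twos; in the standard model it denotes a tower of `n + 1`
twos. -/
def tower (n : ℕ) : Tm := ((appTwos n two).app suc).app zero

end Tm

namespace Fm

/-- "`t` is a natural number", encoded by the unary predicate symbol `0`. -/
def isNat (t : Tm) : Fm := .atom 0 (.cons t .nil)

/-- The equation `a = b`, encoded by the binary predicate symbol `1`. -/
def eq (a b : Tm) : Fm := .atom 1 (.cons a (.cons b .nil))

@[simp]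
theorem subF_isNat (k : ℕ) (u t : Tm) : subF k u (isNat t) = isNat (subT k u t) := rfl

@[simp]
theorem subF_eq (k : ℕ) (u a b : Tm) : subF k u (eq a b) = eq (subT k u a) (subT k u b) := rfl

/-- The hereditary number predicate `N_n`: `N_0 t` says that `t` is a number, and `N_{n+1} t` is
`∀ x (N_n x → N_n (t x))`. -/
def hnat : ℕ → Tm → Fm
  | 0, t => isNat t
  | n + 1, t => .all (.imp (hnat n (.bvar 0)) (hnat n ((liftT 0 t).app (.bvar 0))))

theorem subF_hnat (k : ℕ) (u : Tm) (n : ℕ) (t : Tm) :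
    subF k u (hnat n t) = hnat n (subT k u t) := by
  induction n generalizing k u t with
  | zero => rfl
  | succ n ih => simp [hnat, subF, ih, subT, subT_succ_liftT (Nat.zero_le k)]

theorem inst0_hnat_succ (n : ℕ) (t u : Tm) :
    inst0 (.imp (hnat n (.bvar 0)) (hnat n ((liftT 0 t).app (.bvar 0)))) u =
      .imp (hnat n u) (hnat n (t.app u)) := by
  simp [inst0, subF, subF_hnat, subT, subT_liftT]

theorem fvF_hnat_subset (n : ℕ) (t : Tm) : fvF (hnat n t) ⊆ fvT t := by
  induction n generalizing t with
  | zero => simp [hnat, isNat, fvF, fvTs]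
  | succ n ih =>
    refine List.append_subset.2 ⟨List.Subset.trans (ih _) (List.nil_subset _),
      List.Subset.trans (ih _) ?_⟩
    simp [Tm.app, fvT, fvTs, fvT_liftT]

theorem noEpsF_hnat (n : ℕ) (t : Tm) : noEpsF (hnat n t) = noEpsT t := by
  induction n generalizing t with
  | zero => simp [hnat, isNat, noEpsF, noEpsTs]
  | succ n ih => simp [hnat, noEpsF, ih, noEpsT, noEpsT_liftT]

theorem szF_hnat_le (n : ℕ) (t : Tm) : szF (hnat n t) ≤ 4 ^ n * (szT t + 3) := by
  induction n generalizing t with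
  | zero => simp only [hnat, isNat, szF, szTs]; lia
  | succ n ih =>
    have hx := ih (.bvar 0)
    have htx := ih ((liftT 0 t).app (.bvar 0))
    have := Nat.one_le_pow n 4 (by decide)
    simp only [Tm.szT_app, szT, szT_liftT] at hx htx
    simp only [hnat, szF, pow_succ]
    nlinarith [Nat.zero_le (4 ^ n * szT t)]

/-- The axiom `∀ f ∀ x, 2 f x = f (f x)`. -/
def twoSpec : Fm :=
  .all (.all (eq ((Tm.two.app (.bvar 1)).app (.bvar 0))
    (.app (.bvar 1) (.app (.bvar 1) (.bvar 0)))))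

/-- The axiom `∀ x ∀ y ∀ z, x = y → x z = y z`. -/
def appCongr : Fm :=
  .all (.all (.all (.imp (eq (.bvar 2) (.bvar 1))
    (eq (.app (.bvar 2) (.bvar 0)) (.app (.bvar 1) (.bvar 0))))))

/-- The axiom `∀ x ∀ y, x = y → (N_0 y → N_0 x)`. -/
def isNatCongr : Fm :=
  .all (.all (.imp (eq (.bvar 1) (.bvar 0)) (.imp (isNat (.bvar 0)) (isNat (.bvar 1)))))

/-- The axioms on which the sequents are based. The axiom `∀ x (N_0 x → N_0 (S x))` is literally
`N_1 S`. -/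
def axioms : List Fm := [hnat 0 .zero, hnat 1 .suc, twoSpec, appCongr, isNatCongr]

end Fm

/-! ### Short derivations -/

theorem mem_fvSeq {a : ℕ} {Γ Δ : List Fm} : a ∈ fvSeq Γ Δ ↔ ∃ A ∈ Γ ++ Δ, a ∈ fvF A := by
  simp [fvSeq, or_and_right, exists_or]

theorem exists_notMem_fv (Γ : List Fm) (t : Tm) : ∃ c, c ∉ fvT t ∧ ∀ B ∈ Γ, c ∉ fvF B := by
  obtain ⟨c, hc⟩ := Infinite.exists_notMem_finset (fvT t ++ Γ.flatMap fvF).toFinset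
  simp only [List.mem_toFinset, List.mem_append, List.mem_flatMap, not_or, not_exists,
    not_and] at hc
  exact ⟨c, hc⟩

/-- `Derivable 𝒞 n Γ Δ`: the sequent `Γ ⊢ Δ` has an LK-derivation with at most `n` inferences all of
whose cut formulas belong to `𝒞`. -/
def Derivable (𝒞 : Set Fm) (n : ℕ) (Γ Δ : List Fm) : Prop :=
  ∃ d : Deriv Γ Δ, d.Std ∧ (∀ B ∈ d.cutFms, B ∈ 𝒞) ∧ d.size ≤ n

namespace Derivable

variable {𝒞 : Set Fm} {n : ℕ} {Γ Γ' Δ : List Fm} {A : Fm}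

theorem of_le {m : ℕ} (h : Derivable 𝒞 m Γ Δ) (hmn : m ≤ n) : Derivable 𝒞 n Γ Δ :=
  let ⟨d, hs, hc, hm⟩ := h
  ⟨d, hs, hc, hm.trans hmn⟩

theorem perm (h : Derivable 𝒞 n Γ Δ) (hp : Γ.Perm Γ') : Derivable 𝒞 (n + 1) Γ' Δ :=
  let ⟨d, hs, hc, hn⟩ := h
  ⟨.permL _ _ _ hp d, hs, hc, Nat.succ_le_succ hn⟩

theorem weaken (h : Derivable 𝒞 n Γ Δ) (A : Fm) : Derivable 𝒞 (n + 1) (A :: Γ) Δ :=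
  let ⟨d, hs, hc, hn⟩ := h
  ⟨.wL A _ _ d, hs, hc, Nat.succ_le_succ hn⟩

theorem contract (h : Derivable 𝒞 n (A :: A :: Γ) Δ) : Derivable 𝒞 (n + 1) (A :: Γ) Δ :=
  let ⟨d, hs, hc, hn⟩ := h
  ⟨.cL A _ _ d, hs, hc, Nat.succ_le_succ hn⟩

theorem contract_replicate {k : ℕ} (h : Derivable 𝒞 n (A :: (List.replicate k A ++ Γ)) Δ) :
    Derivable 𝒞 (n + k) (A :: Γ) Δ := by
  induction k generalizing n with
  | zero => exact h
  | succ k ih => rw [← Nat.add_assoc, Nat.add_right_comm]; exact ih h.contract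

theorem weaken_append (h : Derivable 𝒞 n Γ Δ) (Θ : List Fm) :
    Derivable 𝒞 (n + Θ.length) (Θ ++ Γ) Δ := by
  induction Θ with
  | nil => exact h
  | cons A Θ ih => exact ih.weaken A

theorem contract_mem (h : Derivable 𝒞 n (A :: Γ) Δ) (hA : A ∈ Γ) : Derivable 𝒞 (n + 3) Γ Δ := by
  obtain ⟨Γ₁, Γ₂, rfl⟩ := List.append_of_mem hA
  exact ((h.perm (List.perm_middle.cons A)).contract).perm List.perm_middle.symm

theorem contract_subset {Θ : List Fm} (h : Derivable 𝒞 n (Θ ++ Γ) Δ) (hΘ : Θ ⊆ Γ) :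
    Derivable 𝒞 (n + 3 * Θ.length) Γ Δ := by
  induction Θ generalizing n with
  | nil => exact h
  | cons A Θ ih =>
    rw [List.cons_subset] at hΘ
    convert ih (h.contract_mem (List.mem_append_right Θ hΘ.1)) hΘ.2 using 1
    rw [List.length_cons]; ring

end Derivable

/-- `Provable 𝒞 n Γ A`: the formula `A` follows from some of the hypotheses `Γ` by a derivation with
cut formulas in `𝒞` whose number of inferences, increased by the number of hypotheses in use, is at
most `n`. Weakening is free for this measure, and merging all copies of a hypothesis costs at most
two inferences, since each contraction also removes a copy. -/
def Provable (𝒞 : Set Fm) (n : ℕ) (Γ : List Fm) (A : Fm) : Prop :=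
  ∃ Γ₀ ⊆ Γ, ∃ k, Derivable 𝒞 k Γ₀ [A] ∧ k + Γ₀.length ≤ n

namespace Provable

variable {𝒞 : Set Fm} {m n : ℕ} {Γ Γ' : List Fm} {A B C : Fm}

theorem mono (h : Provable 𝒞 n Γ A) (hΓ : Γ ⊆ Γ') : Provable 𝒞 n Γ' A :=
  let ⟨Γ₀, h₀, hd⟩ := h
  ⟨Γ₀, List.Subset.trans h₀ hΓ, hd⟩

theorem of_le (h : Provable 𝒞 m Γ A) (hmn : m ≤ n) : Provable 𝒞 n Γ A :=
  let ⟨Γ₀, h₀, k, hd, hk⟩ := h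
  ⟨Γ₀, h₀, k, hd, hk.trans hmn⟩

theorem derivable (h : Provable 𝒞 n Γ A) : Derivable 𝒞 (3 * n + Γ.length + 1) Γ [A] := by
  obtain ⟨Γ₀, h₀, k, hd, hk⟩ := h
  exact (((hd.weaken_append Γ).perm List.perm_append_comm).contract_subset h₀).of_le (by lia)

open scoped Classical in
theorem exists_derivable_cons (h : Provable 𝒞 n (A :: Γ) B) :
    ∃ Γ₀ ⊆ Γ, ∃ k, Derivable 𝒞 k (A :: Γ₀) [B] ∧ k + Γ₀.length ≤ n + 2 := by
  obtain ⟨Γ₁, h₁, k, hd, hk⟩ := h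
  let Γ₀ := Γ₁.filter (!· == A)
  have hΓ₀ : Γ₀ ⊆ Γ := fun B hB => by grind
  have hp : Γ₁.Perm (List.replicate (Γ₁.count A) A ++ Γ₀) := by
    rw [← List.filter_beq]
    exact (List.filter_append_perm (· == A) Γ₁).symm
  have hlen := hp.length_eq
  rw [List.length_append, List.length_replicate] at hlen
  refine ⟨Γ₀, hΓ₀, ?_⟩
  cases hc : Γ₁.count A with
  | zero =>
    rw [hc] at hp
    exact ⟨_, (hd.perm hp).weaken A, by lia⟩
  | succ j =>
    rw [hc] at hp
    exact ⟨_, (hd.perm hp).contract_replicate, by lia⟩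

theorem ax (h : A ∈ Γ) : Provable 𝒞 2 Γ A :=
  ⟨[A], List.cons_subset.2 ⟨h, List.nil_subset _⟩, 1,
    ⟨.ax A, trivial, fun _ => List.not_mem_nil.elim, le_rfl⟩, le_rfl⟩

theorem cut (hA : A ∈ 𝒞) (h₁ : Provable 𝒞 m Γ A) (h₂ : Provable 𝒞 n (A :: Γ) C) :
    Provable 𝒞 (m + n + 3) Γ C := by
  obtain ⟨Γ₁, hΓ₁, k₁, ⟨d, ds, dc, dn⟩, hk₁⟩ := h₁
  obtain ⟨Γ₂, hΓ₂, k₂, ⟨e, es, ec, en⟩, hk₂⟩ := h₂.exists_derivable_cons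
  refine ⟨Γ₁ ++ Γ₂, List.append_subset.2 ⟨hΓ₁, hΓ₂⟩, k₁ + k₂ + 1,
    ⟨.cut A _ [] _ _ d e, ⟨ds, es⟩, ?_, by simp only [Deriv.size]; lia⟩, ?_⟩
  · grind [Deriv.cutFms]
  · rw [List.length_append]; lia

theorem impR (h : Provable 𝒞 n (A :: Γ) B) : Provable 𝒞 (n + 3) Γ (.imp A B) := by
  obtain ⟨Γ₀, hΓ₀, k, ⟨d, ds, dc, dn⟩, hk⟩ := h.exists_derivable_cons
  exact ⟨Γ₀, hΓ₀, k + 1, ⟨.impR A B _ _ d, ds, dc, Nat.succ_le_succ dn⟩, by lia⟩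

theorem impL (hAB : .imp A B ∈ Γ) (h₁ : Provable 𝒞 m Γ A) (h₂ : Provable 𝒞 n (B :: Γ) C) :
    Provable 𝒞 (m + n + 4) Γ C := by
  obtain ⟨Γ₁, hΓ₁, k₁, ⟨d, ds, dc, dn⟩, hk₁⟩ := h₁
  obtain ⟨Γ₂, hΓ₂, k₂, ⟨e, es, ec, en⟩, hk₂⟩ := h₂.exists_derivable_cons
  refine ⟨.imp A B :: (Γ₁ ++ Γ₂),
    List.cons_subset.2 ⟨hAB, List.append_subset.2 ⟨hΓ₁, hΓ₂⟩⟩, k₁ + k₂ + 1,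
    ⟨.impL A B _ [] _ _ d e, ⟨ds, es⟩, ?_, by simp only [Deriv.size]; lia⟩, ?_⟩
  · grind [Deriv.cutFms]
  · rw [List.length_cons, List.length_append]; lia

theorem allL (t : Tm) (hA : .all A ∈ Γ) (h : Provable 𝒞 n (inst0 A t :: Γ) C) :
    Provable 𝒞 (n + 4) Γ C := by
  obtain ⟨Γ₀, hΓ₀, k, ⟨d, ds, dc, dn⟩, hk⟩ := h.exists_derivable_cons
  exact ⟨.all A :: Γ₀, List.cons_subset.2 ⟨hA, hΓ₀⟩, k + 1,
    ⟨.allL t A _ _ d, ds, dc, Nat.succ_le_succ dn⟩, by rw [List.length_cons]; lia⟩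

theorem allL₂ (t u : Tm) (hA : .all (.all A) ∈ Γ)
    (h : Provable 𝒞 n (inst0 (subF 1 (liftT 0 t) A) u :: Γ) C) : Provable 𝒞 (n + 8) Γ C :=
  allL t hA (n := n + 4) <| allL u List.mem_cons_self <|
    h.mono (List.cons_subset_cons _ (List.subset_cons_self _ _))

theorem allL₃ (t u v : Tm) (hA : .all (.all (.all A)) ∈ Γ)
    (h : Provable 𝒞 n (inst0 (subF 1 (liftT 0 u) (subF 2 (liftT 0 (liftT 0 t)) A)) v :: Γ) C) :
    Provable 𝒞 (n + 12) Γ C :=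
  allL t hA (n := n + 8) <| allL₂ u v List.mem_cons_self <|
    h.mono (List.cons_subset_cons _ (List.subset_cons_self _ _))

theorem allR (a : ℕ) (hΓ : ∀ B ∈ Γ, a ∉ fvF B) (hA : a ∉ fvF A)
    (h : Provable 𝒞 n Γ (inst0 A (.fvar a))) : Provable 𝒞 (n + 1) Γ (.all A) := by
  obtain ⟨Γ₀, hΓ₀, k, ⟨d, ds, dc, dn⟩, hk⟩ := h
  refine ⟨Γ₀, hΓ₀, k + 1, ⟨.allR a A _ _ d, ⟨fun ha => ?_, ds⟩, dc, Nat.succ_le_succ dn⟩, by lia⟩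
  obtain ⟨B, hB, haB⟩ := mem_fvSeq.1 ha
  rcases List.mem_append.1 hB with hB | hB
  · exact hΓ B (hΓ₀ hB) haB
  · rw [List.mem_singleton.1 hB] at haB
    exact hA haB

end Provable

/-! ### Short derivations from the axioms of the applicative language -/

namespace Provable

open Fm

variable {𝒞 : Set Fm} {m n k : ℕ} {Γ : List Fm} {a b f t u : Tm} {C : Fm}

theorem hnat_elim (u : Tm) (ht : hnat (k + 1) t ∈ Γ) (hu : Provable 𝒞 m Γ (hnat k u))
    (h : Provable 𝒞 n (hnat k (t.app u) :: Γ) C) : Provable 𝒞 (m + n + 8) Γ C := by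
  refine allL u ht (n := m + n + 4) ?_
  rw [inst0_hnat_succ]
  exact impL List.mem_cons_self (hu.mono (List.subset_cons_self _ _))
    (h.mono (List.cons_subset_cons _ (List.subset_cons_self _ _)))

theorem hnat_intro (h : ∀ c, Provable 𝒞 n (hnat k (.fvar c) :: Γ) (hnat k (t.app (.fvar c)))) :
    Provable 𝒞 (n + 4) Γ (hnat (k + 1) t) := by
  obtain ⟨c, hct, hcΓ⟩ := exists_notMem_fv Γ t
  refine allR c hcΓ (fun hc => hct (fvF_hnat_subset (k + 1) t hc)) (n := n + 3) ?_
  rw [inst0_hnat_succ]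
  exact (h c).impR

theorem two_elim (f t : Tm) (h2 : twoSpec ∈ Γ)
    (h : Provable 𝒞 n (eq ((Tm.two.app f).app t) (f.app (f.app t)) :: Γ) C) :
    Provable 𝒞 (n + 8) Γ C :=
  allL₂ f t h2 <| by simpa [inst0, subT, subT_liftT] using h

theorem appCongr_elim (c : Tm) (hcong : appCongr ∈ Γ) (hab : eq a b ∈ Γ)
    (h : Provable 𝒞 n (eq (a.app c) (b.app c) :: Γ) C) : Provable 𝒞 (n + 18) Γ C := by
  refine allL₃ a b c hcong (n := n + 6) ?_
  have hinst : Provable 𝒞 (n + 6) (.imp (eq a b) (eq (a.app c) (b.app c)) :: Γ) C :=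
    (impL List.mem_cons_self (ax (.tail _ hab))
      (h.mono (List.cons_subset_cons _ (List.subset_cons_self _ _)))).of_le (by lia)
  simpa [inst0, subF, subT, subT_liftT, subT_succ_liftT (Nat.zero_le 0)] using hinst

theorem isNat_of_eq (hcong : isNatCongr ∈ Γ) (hab : eq a b ∈ Γ) (hb : isNat b ∈ Γ) :
    Provable 𝒞 22 Γ (isNat a) := by
  refine allL₂ a b hcong (n := 14) ?_
  have hinst : Provable 𝒞 14 (.imp (eq a b) (.imp (isNat b) (isNat a)) :: Γ) (isNat a) :=
    impL List.mem_cons_self (ax (.tail _ hab)) (n := 8)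
      (impL List.mem_cons_self (ax (.tail _ (.tail _ hb))) (ax List.mem_cons_self))
  simpa [inst0, subF, subT, subT_liftT] using hinst

theorem hnat_of_eq (hΓ : axioms ⊆ Γ) (hab : eq a b ∈ Γ) (hb : hnat k b ∈ Γ) :
    Provable 𝒞 (32 * k + 22) Γ (hnat k a) := by
  induction k generalizing a b Γ with
  | zero => exact isNat_of_eq (hΓ (by simp [axioms])) hab hb
  | succ k ih =>
    refine hnat_intro (n := 32 * k + 50) fun c => ?_
    refine appCongr_elim (.fvar c) (.tail _ (hΓ (by simp [axioms]))) (.tail _ hab)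
      (n := 32 * k + 32) ?_
    refine (hnat_elim (.fvar c) (.tail _ (.tail _ hb)) (ax (.tail _ List.mem_cons_self))
      (n := 32 * k + 22) (ih ?_ (.tail _ List.mem_cons_self) List.mem_cons_self)).of_le (by lia)
    exact fun B hB => .tail _ (.tail _ (.tail _ (hΓ hB)))

theorem hnat_two (hΓ : axioms ⊆ Γ) (k : ℕ) :
    Provable 𝒞 (32 * k + 58) Γ (hnat (k + 2) .two) := by
  refine hnat_intro (n := 32 * k + 54) fun f => hnat_intro (n := 32 * k + 50) fun x => ?_
  have hf : hnat (k + 1) (.fvar f) ∈ hnat k (.fvar x) :: hnat (k + 1) (.fvar f) :: Γ :=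
    .tail _ List.mem_cons_self
  refine (hnat_elim (.fvar x) hf (ax List.mem_cons_self) (n := 32 * k + 40) ?_).of_le (by lia)
  refine (hnat_elim (.app (.fvar f) (.fvar x)) (.tail _ hf) (ax List.mem_cons_self)
    (n := 32 * k + 30) ?_).of_le (by lia)
  refine two_elim (.fvar f) (.fvar x) ?_ (n := 32 * k + 22)
    (hnat_of_eq (fun B hB => ?_) List.mem_cons_self (.tail _ List.mem_cons_self))
  · exact .tail _ (.tail _ (.tail _ (.tail _ (hΓ (by simp [axioms])))))
  · exact .tail _ (.tail _ (.tail _ (.tail _ (.tail _ (hΓ hB)))))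

theorem isNat_appTwos (hΓ : axioms ⊆ Γ) (ht : hnat (k + 2) t ∈ Γ) :
    Provable 𝒞 (50 * (k + 1) ^ 2) Γ (isNat (((Tm.appTwos k t).app .suc).app .zero)) := by
  induction k generalizing t Γ with
  | zero =>
    refine (hnat_elim .suc ht (ax (hΓ (by simp [axioms]))) (n := 12) ?_).of_le (by lia)
    exact hnat_elim .zero List.mem_cons_self (ax (.tail _ (hΓ (by simp [axioms]))))
      (ax List.mem_cons_self)
  | succ k ih =>
    refine (hnat_elim .two ht (hnat_two hΓ k)
      (ih (List.subset_cons_of_subset _ hΓ) List.mem_cons_self)).of_le ?_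
    grind

theorem isNat_tower (hΓ : axioms ⊆ Γ) (hn : hnat (n + 2) .two ∈ 𝒞) :
    Provable 𝒞 (50 * (n + 2) ^ 2) Γ (isNat (.tower n)) := by
  refine (cut hn (hnat_two hΓ n)
    (isNat_appTwos (List.subset_cons_of_subset _ hΓ) List.mem_cons_self)).of_le ?_
  grind

end Provable

/-! ### Semantics -/

/-- Insert the value `u` at position `k` of an environment; `insertAt 0 u e` is the environment seen
below a quantifier. -/
def insertAt {U : Type*} (k : ℕ) (u : U) (e : ℕ → U) : ℕ → U :=
  fun n => if n = k then u else if n < k then e n else e (n - 1)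

theorem insertAt_succ_insertAt_zero {U : Type*} (k : ℕ) (u x : U) (e : ℕ → U) :
    insertAt (k + 1) u (insertAt 0 x e) = insertAt 0 x (insertAt k u e) := by
  funext n
  grind [insertAt]

section

variable {U : Type*} [Inhabited U] (F : ℕ → List U → U)

mutual
/-- The value of a term, where `F` interprets the function symbols at all arities at once, `ρ`
evaluates the free and `e` the bound variables. Epsilon terms receive a default value, as only
first-order formulas are interpreted. -/
def evalT (ρ e : ℕ → U) : Tm → U
  | .bvar n => e n
  | .fvar a => ρ a
  | .func f ts => F f (evalTs ρ e ts)
  | .eps _ => default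
/-- The values of a list of terms. -/
def evalTs (ρ e : ℕ → U) : Tms → List U
  | .nil => []
  | .cons t ts => evalT ρ e t :: evalTs ρ e ts
end

mutual
theorem evalT_liftT (ρ e : ℕ → U) (k : ℕ) (u : U) :
    ∀ t, evalT F ρ (insertAt k u e) (liftT k t) = evalT F ρ e t
  | .bvar n => by grind [liftT, evalT, insertAt]
  | .fvar _ => rfl
  | .func f ts => congrArg (F f) (evalTs_liftTs ρ e k u ts)
  | .eps _ => rfl
theorem evalTs_liftTs (ρ e : ℕ → U) (k : ℕ) (u : U) :
    ∀ ts, evalTs F ρ (insertAt k u e) (liftTs k ts) = evalTs F ρ e ts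
  | .nil => rfl
  | .cons t ts => congrArg₂ List.cons (evalT_liftT ρ e k u t) (evalTs_liftTs ρ e k u ts)
end

mutual
theorem evalT_subT (ρ e : ℕ → U) (k : ℕ) (u : Tm) :
    ∀ t, evalT F ρ e (subT k u t) = evalT F ρ (insertAt k (evalT F ρ e u) e) t
  | .bvar n => by grind [subT, evalT, insertAt]
  | .fvar _ => rfl
  | .func f ts => congrArg (F f) (evalTs_subTs ρ e k u ts)
  | .eps _ => rfl
theorem evalTs_subTs (ρ e : ℕ → U) (k : ℕ) (u : Tm) :
    ∀ ts, evalTs F ρ e (subTs k u ts) = evalTs F ρ (insertAt k (evalT F ρ e u) e) ts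
  | .nil => rfl
  | .cons t ts => congrArg₂ List.cons (evalT_subT ρ e k u t) (evalTs_subTs ρ e k u ts)
end

mutual
theorem evalT_abT (ρ e : ℕ → U) (a k : ℕ) :
    ∀ t, evalT F ρ e (abT a k t) = evalT F (Function.update ρ a (e k)) e t
  | .bvar _ => rfl
  | .fvar b => by grind [abT, evalT]
  | .func f ts => congrArg (F f) (evalTs_abTs ρ e a k ts)
  | .eps _ => rfl
theorem evalTs_abTs (ρ e : ℕ → U) (a k : ℕ) :
    ∀ ts, evalTs F ρ e (abTs a k ts) = evalTs F (Function.update ρ a (e k)) e ts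
  | .nil => rfl
  | .cons t ts => congrArg₂ List.cons (evalT_abT ρ e a k t) (evalTs_abTs ρ e a k ts)
end

end

/-- A first-order structure with universe `U` for the untyped symbols of the calculus. -/
structure Interp (U : Type*) where
  /-- the interpretation of the function symbols -/
  func : ℕ → List U → U
  /-- the interpretation of the predicate symbols -/
  rel : ℕ → List U → Prop

namespace Interp

variable {U : Type*} [Inhabited U]

/-- Tarski satisfaction. -/
def Sat (M : Interp U) (ρ : ℕ → U) : (ℕ → U) → Fm → Prop
  | e, .atom p ts => M.rel p (evalTs M.func ρ e ts)
  | e, .and A B => Sat M ρ e A ∧ Sat M ρ e B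
  | e, .or A B => Sat M ρ e A ∨ Sat M ρ e B
  | e, .imp A B => Sat M ρ e A → Sat M ρ e B
  | e, .not A => ¬ Sat M ρ e A
  | e, .all A => ∀ x, Sat M ρ (insertAt 0 x e) A
  | e, .ex A => ∃ x, Sat M ρ (insertAt 0 x e) A

variable {M : Interp U}

theorem sat_subF {ρ : ℕ → U} (u : Tm) (A : Fm) (k : ℕ) (e : ℕ → U) :
    M.Sat ρ e (subF k u A) ↔ M.Sat ρ (insertAt k (evalT M.func ρ e u) e) A := by
  match A with
  | .atom p ts => exact iff_of_eq (congrArg (M.rel p) (evalTs_subTs M.func ρ e k u ts))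
  | .and A B => exact and_congr (sat_subF u A k e) (sat_subF u B k e)
  | .or A B => exact or_congr (sat_subF u A k e) (sat_subF u B k e)
  | .imp A B => exact imp_congr (sat_subF u A k e) (sat_subF u B k e)
  | .not A => exact not_congr (sat_subF u A k e)
  | .all A =>
    refine forall_congr' fun x => (sat_subF (liftT 0 u) A (k + 1) _).trans ?_
    rw [evalT_liftT, insertAt_succ_insertAt_zero]
  | .ex A =>
    refine exists_congr fun x => (sat_subF (liftT 0 u) A (k + 1) _).trans ?_
    rw [evalT_liftT, insertAt_succ_insertAt_zero]

theorem sat_inst0 {ρ e : ℕ → U} (A : Fm) (t : Tm) :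
    M.Sat ρ e (inst0 A t) ↔ M.Sat ρ (insertAt 0 (evalT M.func ρ e t) e) A :=
  sat_subF t A 0 e

theorem sat_abF {ρ : ℕ → U} (a : ℕ) (A : Fm) (k : ℕ) (e : ℕ → U) :
    M.Sat ρ e (abF a k A) ↔ M.Sat (Function.update ρ a (e k)) e A := by
  match A with
  | .atom p ts => exact iff_of_eq (congrArg (M.rel p) (evalTs_abTs M.func ρ e a k ts))
  | .and A B => exact and_congr (sat_abF a A k e) (sat_abF a B k e)
  | .or A B => exact or_congr (sat_abF a A k e) (sat_abF a B k e)
  | .imp A B => exact imp_congr (sat_abF a A k e) (sat_abF a B k e)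
  | .not A => exact not_congr (sat_abF a A k e)
  | .all A => exact forall_congr' fun x => sat_abF a A (k + 1) (insertAt 0 x e)
  | .ex A => exact exists_congr fun x => sat_abF a A (k + 1) (insertAt 0 x e)

theorem sat_uclose {A : Fm} (h : ∀ ρ e, M.Sat ρ e A) (ρ e : ℕ → U) : M.Sat ρ e (uclose A) := by
  refine uclose_induction (P := fun B => ∀ ρ e, M.Sat ρ e B) h (fun a B hB ρ e x => ?_) ρ e
  exact (sat_abF a B 0 _).2 (hB _ _)

end Interp

/-! ### Cut-free derivations of sequents with weak quantifiers only -/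

mutual
theorem posW_subF (k : ℕ) (u : Tm) : ∀ A, posW (subF k u A) = posW A
  | .atom _ _ => rfl
  | .and A B | .or A B => congrArg₂ (· && ·) (posW_subF k u A) (posW_subF k u B)
  | .imp A B => congrArg₂ (· && ·) (negW_subF k u A) (posW_subF k u B)
  | .not A => negW_subF k u A
  | .all _ => rfl
  | .ex A => posW_subF (k + 1) (liftT 0 u) A
theorem negW_subF (k : ℕ) (u : Tm) : ∀ A, negW (subF k u A) = negW A
  | .atom _ _ => rfl
  | .and A B | .or A B => congrArg₂ (· && ·) (negW_subF k u A) (negW_subF k u B)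
  | .imp A B => congrArg₂ (· && ·) (posW_subF k u A) (negW_subF k u B)
  | .not A => posW_subF k u A
  | .all A => negW_subF (k + 1) (liftT 0 u) A
  | .ex _ => rfl
end

namespace Deriv

/-- The instances `(A, t)` of universal formulas `∀ x A` introduced by `∀_l`-inferences. -/
def allInsts : ∀ {Γ Δ}, Deriv Γ Δ → List (Fm × Tm)
  | _, _, ax _ => []
  | _, _, allL t A _ _ d => (A, t) :: d.allInsts
  | _, _, andR _ _ _ _ _ _ d e | _, _, orL _ _ _ _ _ _ d e | _, _, impL _ _ _ _ _ _ d e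
  | _, _, cut _ _ _ _ _ d e => d.allInsts ++ e.allInsts
  | _, _, andL _ _ _ _ d | _, _, orR _ _ _ _ d | _, _, impR _ _ _ _ d | _, _, notL _ _ _ d
  | _, _, notR _ _ _ d | _, _, wL _ _ _ d | _, _, wR _ _ _ d | _, _, cL _ _ _ d
  | _, _, cR _ _ _ d | _, _, allR _ _ _ _ d | _, _, exL _ _ _ _ d | _, _, exR _ _ _ _ d
  | _, _, permL _ _ _ _ d | _, _, permR _ _ _ _ d => d.allInsts

theorem length_allInsts_le_size {Γ Δ : List Fm} (d : Deriv Γ Δ) :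
    d.allInsts.length ≤ d.size := by
  induction d with
  | _ => simp only [allInsts, size, List.length_append, List.length_cons, List.length_nil]; lia

end Deriv

namespace Interp

variable {U : Type*} [Inhabited U] {M : Interp U} {ρ e : ℕ → U} {I : List (Fm × Tm)}

/-- Satisfaction of an antecedent formula as far as it is visible to a derivation whose universal
inferences are all listed in `I`: a universal formula has to hold at the listed terms only. -/
def SatOn (M : Interp U) (ρ e : ℕ → U) (I : List (Fm × Tm)) (A : Fm) : Prop :=
  M.Sat ρ e A ∨ ∃ B, A = .all B ∧ ∀ t, (B, t) ∈ I → M.Sat ρ e (inst0 B t)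

theorem SatOn.sat {A : Fm} (h : M.SatOn ρ e I A) (hA : ∀ B, A ≠ .all B) : M.Sat ρ e A :=
  h.resolve_right fun ⟨B, hB, _⟩ => hA B hB

theorem exists_sat_of_satOn {Γ Δ : List Fm} (d : Deriv Γ Δ) (hcut : d.cutFms = [])
    (hw : WeakSeq Γ Δ) (hI : d.allInsts ⊆ I) (hΓ : ∀ A ∈ Γ, M.SatOn ρ e I A) :
    ∃ A ∈ Δ, M.Sat ρ e A := by
  by_contra! hΔ
  induction d with
  | ax A =>
    refine hΔ A (List.mem_singleton_self A) ((hΓ A (List.mem_singleton_self A)).sat ?_)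
    rintro B rfl
    exact Bool.false_ne_true (hw.2 _ (List.mem_singleton_self _))
  | permL Γ Γ' Δ hp d ih =>
    exact ih hcut ⟨fun A hA => hw.1 A (hp.mem_iff.1 hA), hw.2⟩ hI
      (fun A hA => hΓ A (hp.mem_iff.1 hA)) hΔ
  | permR Γ Δ Δ' hp d ih =>
    exact ih hcut ⟨hw.1, fun A hA => hw.2 A (hp.mem_iff.1 hA)⟩ hI hΓ
      (fun A hA => hΔ A (hp.mem_iff.1 hA))
  | allL t A Γ Δ d ih =>
    rw [Deriv.allInsts, List.cons_subset] at hI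
    have hinst : M.Sat ρ e (inst0 A t) := by
      rcases hΓ _ List.mem_cons_self with h | ⟨B, hB, h⟩
      · exact (sat_inst0 A t).2 (h _)
      · cases hB
        exact h t hI.1
    have hw' : negW (inst0 A t) = true := (negW_subF 0 t A).trans (hw.1 (.all A) List.mem_cons_self)
    refine ih hcut ⟨?_, hw.2⟩ hI.2 ?_ hΔ
    · exact List.forall_mem_cons.2 ⟨hw', fun B hB => hw.1 B (.tail _ hB)⟩
    · exact List.forall_mem_cons.2 ⟨.inl hinst, fun B hB => hΓ B (.tail _ hB)⟩
  | _ =>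
    simp only [WeakSeq, Deriv.cutFms, Deriv.allInsts, posW, negW, List.forall_mem_cons,
      List.forall_mem_append, List.append_eq_nil_iff, List.append_subset, Bool.and_eq_true,
      reduceCtorEq, Bool.false_eq_true] at * <;>
    grind [SatOn, Sat, sat_inst0, inst0, posW_subF]

end Interp

/-! ### The hierarchy of finite types and the lower bound -/

theorem iterExp_strictMono (k : ℕ) : StrictMono (iterExp k) := by
  induction k with
  | zero => exact strictMono_id
  | succ k ih => exact (pow_right_strictMono₀ one_lt_two).comp ih

theorem iterExp_add (k m n : ℕ) : iterExp (k + m) n = iterExp k (iterExp m n) := by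
  induction k with
  | zero => rw [Nat.zero_add]; rfl
  | succ k ih => rw [Nat.succ_add]; exact congrArg (2 ^ ·) ih

theorem two_pow_succ_le_iterExp (n : ℕ) : 2 ^ (n + 1) ≤ iterExp n 2 := by
  induction n with
  | zero => exact le_rfl
  | succ n ih => exact Nat.pow_le_pow_right two_pos (Nat.lt_two_pow_self.trans_le ih)

theorem iterate_iterate_two {α : Type*} (m : ℕ) (f : α → α) :
    (fun g : α → α => g^[2])^[m] f = f^[2 ^ m] := by
  induction m with
  | zero => rfl
  | succ m ih => rw [Function.iterate_succ_apply', ih, ← Function.iterate_mul, pow_succ]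

/-- The finite types `0`, `0 → 0`, `(0 → 0) → (0 → 0)`, … over the natural numbers. -/
def EndPow : ℕ → Type
  | 0 => ℕ
  | n + 1 => EndPow n → EndPow n

/-- The default element of a finite type: the number `0` or the identity map. -/
def EndPow.dflt : ∀ n, EndPow n
  | 0 => (0 : ℕ)
  | _ + 1 => id

/-- The universe of the standard models: as terms are untyped, an element has one component in
every finite type. -/
def EndSeq : Type := ∀ n, EndPow n

namespace EndSeq

instance : Inhabited EndSeq := ⟨EndPow.dflt⟩

/-- Componentwise application. -/
def app (f x : EndSeq) : EndSeq := fun n => f (n + 1) (x n)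

/-- The operator `f ↦ f ∘ f` in all types in which it makes sense. -/
def two : EndSeq
  | n + 2 => fun f : EndPow n → EndPow n => f^[2]
  | n => EndPow.dflt n

/-- The successor function in type `0 → 0`. -/
def suc : EndSeq
  | 1 => Nat.succ
  | n => EndPow.dflt n

/-- The interpretation of the applicative language in the finite types. The constant `0` is covered
by the default case, as the default number is `0`. -/
def func : ℕ → List EndSeq → EndSeq
  | 0, [f, x] => f.app x
  | 1, [] => two
  | 2, [] => suc
  | _, _ => default

variable {n : ℕ} {ρ e : ℕ → EndSeq}

theorem evalT_appTwos {t : Tm} {k m : ℕ}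
    (ht : evalT func ρ e t (k + 2) = fun f : EndPow k → EndPow k => f^[m]) :
    evalT func ρ e (((Tm.appTwos k t).app .suc).app .zero) 0 = iterExp k m := by
  induction k generalizing t m with
  | zero =>
    change evalT func ρ e t 2 Nat.succ (0 : ℕ) = m
    rw [ht]
    exact Nat.succ_iterate 0 m |>.trans (Nat.zero_add m)
  | succ k ih =>
    refine (ih (m := 2 ^ m) ?_).trans (iterExp_add k 1 m).symm
    change evalT func ρ e t (k + 3) (fun g : EndPow k → EndPow k => g^[2]) = _
    rw [ht]
    exact funext (iterate_iterate_two m)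

theorem evalT_tower : evalT func ρ e (.tower n) 0 = iterExp n 2 :=
  evalT_appTwos rfl

end EndSeq

/-- The standard model with "is a number" interpreted as "is at most `v`". -/
def boundedModel (v : ℕ) : Interp EndSeq where
  func := EndSeq.func
  rel
    | 0, [x] => LE.le (α := ℕ) (x 0) v
    | 1, [x, y] => x = y
    | _, _ => False

namespace boundedModel

open Interp Fm

variable {v : ℕ} {ρ e : ℕ → EndSeq}

theorem sat_isNat {t : Tm} :
    (boundedModel v).Sat ρ e (isNat t) ↔ LE.le (α := ℕ) (evalT EndSeq.func ρ e t 0) v :=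
  Iff.rfl

theorem satOn_axioms {I : List (Fm × Tm)}
    (hI : ∀ p ∈ I, evalT EndSeq.func ρ e p.2 0 ≠ v) {A : Fm} (hA : A ∈ axioms) :
    (boundedModel v).SatOn ρ e I A := by
  simp only [axioms, List.mem_cons, List.not_mem_nil, or_false] at hA
  rcases hA with rfl | rfl | rfl | rfl | rfl
  · exact .inl (Nat.zero_le v)
  · refine .inr ⟨_, rfl, fun t ht => ?_⟩
    rw [inst0_hnat_succ]
    exact fun hle => Nat.lt_of_le_of_ne hle (hI _ ht)
  · exact .inl fun f x => rfl
  · exact .inl fun x y z hxy => congrArg (EndSeq.app · z) hxy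
  · exact .inl fun x y hxy hy => (congrArg (fun u : EndSeq => LE.le (α := ℕ) (u 0) v) hxy).mpr hy

end boundedModel

/-! ### The sequents -/

/-- The universal closure of `A^M → A^M`, the form in which the sequents mention their cut formula
`A`. -/
def idClosure (A : Fm) : Fm := uclose (.imp (matrix A) (matrix A))

theorem noEpsF_idClosure {A : Fm} (hA : noEpsF A = true) : noEpsF (idClosure A) = true := by
  refine noEpsF_uclose ?_
  rw [noEpsF, matrix, noEpsF_mxF, hA, Bool.and_true]

theorem negW_idClosure (A : Fm) : negW (idClosure A) = true :=
  negW_uclose <| have h := posW_mxF_and_negW_mxF (maxFv A + 1) 0 A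
    (Bool.and_eq_true _ _).mpr h

theorem szF_idClosure_le (A : Fm) : szF (idClosure A) ≤ 4 * szF A + 2 := by
  refine (szF_uclose_le _).trans ?_
  have := szF_mxF_le (maxFv A + 1) 0 A
  rw [szF, matrix]
  lia

theorem Interp.sat_idClosure {U : Type*} [Inhabited U] {M : Interp U} (A : Fm) (ρ e : ℕ → U) :
    M.Sat ρ e (idClosure A) :=
  sat_uclose (fun _ _ => id) ρ e

/-- The antecedent of the `n`-th sequent: the axioms and the identity on the matrix of the only cut
formula, `N_{n+2} 2`. -/
def antecedent (n : ℕ) : List Fm := idClosure (.hnat (n + 2) .two) :: Fm.axioms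

/-- The succedent of the `n`-th sequent: the tower of twos is a number. -/
def succedent (n : ℕ) : List Fm := [.isNat (.tower n)]

theorem seqSize_eq_sum (Γ Δ : List Fm) : seqSize Γ Δ = ((Γ ++ Δ).map szF).sum := by
  rw [seqSize, List.sum_eq_foldr, List.foldr_map]

section

variable (n : ℕ)

theorem foSeq_antecedent_succedent : FOSeq (antecedent n) (succedent n) := by
  have htower : noEpsT (.tower n) = true := by
    simp [Tm.tower, Tm.noEpsT_appTwos, Tm.two, Tm.suc, Tm.zero, noEpsT, noEpsTs]
  refine ⟨List.forall_mem_cons.2 ⟨noEpsF_idClosure (Fm.noEpsF_hnat _ _), by decide⟩,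
    List.forall_mem_singleton.2 ?_⟩
  simpa [isFO, Fm.isNat, noEpsF, noEpsTs] using htower

theorem weakSeq_antecedent_succedent : WeakSeq (antecedent n) (succedent n) :=
  ⟨List.forall_mem_cons.2 ⟨negW_idClosure _, by decide⟩, List.forall_mem_singleton.2 rfl⟩

theorem seqSize_antecedent_succedent_le :
    seqSize (antecedent n) (succedent n) ≤ 320 * 4 ^ n := by
  have hid := szF_idClosure_le (.hnat (n + 2) .two)
  have hnat : szF (.hnat (n + 2) .two) ≤ 4 ^ (n + 2) * 4 := Fm.szF_hnat_le (n + 2) .two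
  have haxioms : (Fm.axioms.map szF).sum = 48 := by decide
  have htower : szF (.isNat (.tower n)) = 2 * n + 6 := by
    simp only [Fm.isNat, szF, szTs, Tm.tower, Tm.szT_app, Tm.szT_appTwos, Tm.two, Tm.suc, Tm.zero,
      szT]
    lia
  have hn : n < 4 ^ n := Nat.lt_pow_self (by decide)
  rw [seqSize_eq_sum, antecedent, succedent, List.map_append, List.map_cons, List.map_singleton,
    List.sum_append, List.sum_cons, List.sum_singleton, haxioms, htower]
  lia

end

variable {n : ℕ}

theorem derivable_antecedent_succedent :
    Derivable {.hnat (n + 2) .two} (150 * (n + 2) ^ 2 + 7) (antecedent n) (succedent n) :=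
  (Provable.isNat_tower (List.subset_cons_self _ _) (Set.mem_singleton _)).derivable.of_le <| by
    change 3 * (50 * (n + 2) ^ 2) + 6 + 1 ≤ _
    lia

theorem iterExp_le_length_allInsts (d : Deriv (antecedent n) (succedent n)) (hd : d.cutFms = []) :
    iterExp n 2 ≤ d.allInsts.length := by
  by_contra! hlt
  let values : List ℕ := d.allInsts.map fun p => evalT EndSeq.func default default p.2 0
  have hcard : values.toFinset.card < (Finset.range (iterExp n 2)).card := by
    rw [Finset.card_range]
    exact (List.toFinset_card_le values).trans_lt ((List.length_map _).trans_lt hlt)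
  obtain ⟨v, hv, hvalues⟩ := Finset.exists_mem_notMem_of_card_lt_card hcard
  rw [Finset.mem_range] at hv
  have hI : ∀ p ∈ d.allInsts, evalT EndSeq.func default default p.2 0 ≠ v :=
    fun p hp h => hvalues (List.mem_toFinset.2 (List.mem_map.2 ⟨p, hp, h⟩))
  obtain ⟨A, hA, hsat⟩ := Interp.exists_sat_of_satOn d hd (weakSeq_antecedent_succedent n)
    (List.Subset.refl _) (List.forall_mem_cons.2
      ⟨.inl (Interp.sat_idClosure _ _ _), fun A => boundedModel.satOn_axioms hI⟩)
  rw [List.mem_singleton.1 hA, boundedModel.sat_isNat, EndSeq.evalT_tower] at hsat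
  exact hv.not_ge hsat

/-! ### No elementary bound -/

/-- With `n = 2k + 1`, the argument `2 ^ n` stays below the inner tower in
`iterExp n 2 = iterExp k (iterExp (k + 1) 2)`. -/
theorem IsElementary.exists_lt_iterExp {f : ℕ → ℕ} (hf : IsElementary f) :
    ∃ n, f (2 ^ n - 1) < iterExp n 2 := by
  obtain ⟨k, hk⟩ := hf
  refine ⟨k + (k + 1), (hk _).trans_lt ?_⟩
  rw [iterExp_add k (k + 1)]
  refine iterExp_strictMono k ?_
  have hexp : k + (k + 1) ≤ iterExp k 2 :=
    (by lia : k + (k + 1) ≤ 2 * (k + 1)).trans <|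
      (Nat.mul_le_pow (by decide) (k + 1)).trans (two_pow_succ_le_iterExp k)
  exact Nat.sub_one_lt_of_le (Nat.two_pow_pos _) (Nat.pow_le_pow_right two_pos hexp)

theorem not_forall_exists_cutFree_size_le {f : ℕ → ℕ} (hf : IsElementary f) :
    ¬ ∀ i, ∃ d : Deriv (antecedent (Nat.log 2 (i + 1))) (succedent (Nat.log 2 (i + 1))),
      d.cutFms = [] ∧ d.size ≤ f i := by
  intro h
  obtain ⟨n, hn⟩ := hf.exists_lt_iterExp
  have hlog : Nat.log 2 (2 ^ n - 1 + 1) = n := by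
    rw [Nat.sub_add_cancel (Nat.one_le_two_pow), Nat.log_pow one_lt_two]
  obtain ⟨d, hd, hsize⟩ := h (2 ^ n - 1)
  have := (iterExp_le_length_allInsts d hd).trans (d.length_allInsts_le_size.trans hsize)
  rw [hlog] at this
  exact this.not_gt hn

theorem four_pow_log_le (i : ℕ) : 4 ^ Nat.log 2 (i + 1) ≤ (i + 1) ^ 2 := by
  rw [show 4 = 2 ^ 2 from rfl, pow_right_comm]
  exact Nat.pow_le_pow_left (Nat.pow_log_le_self 2 i.succ_ne_zero) 2

/-- There is a family of first-order sequents `S i` such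
that: (1) the size of `S i` is polynomial in `i`; (2) no elementary function of
`i` bounds the size of the smallest cut-free LK⁺-proofs, nor of the smallest
cut-free LK⁺⁺-proofs, of `S i`; (3) `S i` has proofs with cuts of polynomial
size; (4) `S i` contains weak quantifiers only; (5) for every cut formula `A`
of the polynomial-size proof, `∀x̄ (A^M → A^M)` occurs in the antecedent of
`S i`. -/
theorem worst_case_for_lkplus :
    ∃ S : ℕ → List Fm × List Fm,
      (∀ i, FOSeq (S i).1 (S i).2) ∧
      -- (1)
      (∃ p : Polynomial ℕ, ∀ i, seqSize (S i).1 (S i).2 ≤ p.eval i) ∧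
      -- (2) for cut-free LK⁺-proofs
      (∀ f : ℕ → ℕ, IsElementary f →
        ¬ ∀ i, ∃ d : Deriv (S i).1 (S i).2,
            SuitP d ∧ d.cutFms = [] ∧ d.size ≤ f i) ∧
      -- (2) likewise for cut-free LK⁺⁺-proofs
      (∀ f : ℕ → ℕ, IsElementary f →
        ¬ ∀ i, ∃ d : Deriv (S i).1 (S i).2,
            SuitPP d ∧ d.cutFms = [] ∧ d.size ≤ f i) ∧
      -- (3) together with (5)
      (∃ q : Polynomial ℕ, ∀ i, ∃ d : Deriv (S i).1 (S i).2,
          d.Std ∧ d.size ≤ q.eval i ∧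
          ∀ A ∈ d.cutFms,
            uclose (Fm.imp (matrix A) (matrix A)) ∈ (S i).1) ∧
      -- (4)
      (∀ i, WeakSeq (S i).1 (S i).2) := by
  refine ⟨fun i => (antecedent (Nat.log 2 (i + 1)), succedent (Nat.log 2 (i + 1))),
    fun i => foSeq_antecedent_succedent _, ⟨320 * (.X + 1) ^ 2, fun i => ?_⟩,
    fun f hf h => not_forall_exists_cutFree_size_le hf fun i => (h i).imp fun _ hd => hd.2,
    fun f hf h => not_forall_exists_cutFree_size_le hf fun i => (h i).imp fun _ hd => hd.2,
    ⟨150 * (.X + 2) ^ 2 + 7, fun i => ?_⟩, fun i => weakSeq_antecedent_succedent _⟩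
  · have hpow := four_pow_log_le i
    have hsize := seqSize_antecedent_succedent_le (Nat.log 2 (i + 1))
    simp only [Polynomial.eval_mul, Polynomial.eval_pow, Polynomial.eval_add, Polynomial.eval_X,
      Polynomial.eval_one, Polynomial.eval_ofNat]
    lia
  · obtain ⟨d, hstd, hcut, hsize⟩ := @derivable_antecedent_succedent (Nat.log 2 (i + 1))
    refine ⟨d, hstd, hsize.trans ?_, fun A hA => hcut A hA ▸ List.mem_cons_self⟩
    have hlog : Nat.log 2 (i + 1) ≤ i := Nat.lt_succ_iff.1 (Nat.log_lt_self 2 i.succ_ne_zero)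
    simp only [Polynomial.eval_mul, Polynomial.eval_pow, Polynomial.eval_add, Polynomial.eval_X,
      Polynomial.eval_ofNat]
    gcongr

end EpsCalc
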